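/- Assume Π > 0 and Γ > 0 at every (x,y) ∈ U × (ℝⁿ∖{0}), and set D^i = 2G^i − 2·^αG^i, where G^i are the spray coefficients of F. Then at every (x,y): 2Ψ_s·^βs_{i0} + 2Ψ_s̄·^γs_{i0} = ℓ_{ir}D^r − (1/α)[Ψ_ss·^βr_00 + Ψ_ss̄·^γr_00]·h_i − (1/α)[Ψ_ss̄·^βr_00 + Ψ_s̄s̄·^γr_00]·h̄_i, where ℓ_{ir} = ∂²F/∂y^i∂y^r, h_i = b_i − s·∂α/∂y^i, h̄_i = γ_i − s̄·∂α/∂y^i. -/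

import Mathlib

noncomputable section

open Set

/-- `a^{ij} u_i v_j` : the pairing of two covectors via the inverse matrix. -/
def quadInv {n : ℕ} (a : Matrix (Fin n) (Fin n) ℝ) (u v : Fin n → ℝ) : ℝ :=
  ∑ i, ∑ j, a⁻¹ i j * u i * v j

/-- `α(y) = √(a_{ij} y^i y^j)`. -/
def alph {n : ℕ} (a : Matrix (Fin n) (Fin n) ℝ) (y : Fin n → ℝ) : ℝ :=
  Real.sqrt (∑ i, ∑ j, a i j * y i * y j)

/-- `v_i y^i`. -/
def oneForm {n : ℕ} (v y : Fin n → ℝ) : ℝ := ∑ i, v i * y i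

/-- `s(y) = v_i y^i / α(y)`. -/
def sVar {n : ℕ} (a : Matrix (Fin n) (Fin n) ℝ) (v y : Fin n → ℝ) : ℝ :=
  oneForm v y / alph a y

/-- The (α,β,γ)-metric `F(y) = α·Ψ(s, s̄)`. -/
def Fm {n : ℕ} (a : Matrix (Fin n) (Fin n) ℝ) (bv gv : Fin n → ℝ)
    (Ψ : ℝ → ℝ → ℝ) (y : Fin n → ℝ) : ℝ :=
  alph a y * Ψ (sVar a bv y) (sVar a gv y)

/-- Partial derivative of a function on `ℝⁿ` in the `i`-th coordinate direction. -/
def pd {n : ℕ} (f : (Fin n → ℝ) → ℝ) (y : Fin n → ℝ) (i : Fin n) : ℝ :=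
  fderiv ℝ f y (Pi.single i 1)

/-- Second partial derivative. -/
def pd2 {n : ℕ} (f : (Fin n → ℝ) → ℝ) (y : Fin n → ℝ) (i j : Fin n) : ℝ :=
  pd (fun z => pd f z j) y i

/-- Partial derivative with respect to the first slot (`∂/∂s`). -/
def Ds (Ψ : ℝ → ℝ → ℝ) : ℝ → ℝ → ℝ := fun p q => deriv (fun u => Ψ u q) p

/-- Partial derivative with respect to the second slot (`∂/∂s̄`). -/
def Dt (Ψ : ℝ → ℝ → ℝ) : ℝ → ℝ → ℝ := fun p q => deriv (fun v => Ψ p v) q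

/-- `h_i = v_i − s·α_i`. -/
def hl {n : ℕ} (a : Matrix (Fin n) (Fin n) ℝ) (v y : Fin n → ℝ) (i : Fin n) : ℝ :=
  v i - sVar a v y * pd (alph a) y i

/-- Fundamental tensor `g_{ij} = ½ ∂²(F²)/∂yⁱ∂yʲ`. -/
def fundT {n : ℕ} (F : (Fin n → ℝ) → ℝ) (y : Fin n → ℝ) (i j : Fin n) : ℝ :=
  (1 / 2) * pd2 (fun z => F z ^ 2) y i j

/-- `Π = Ψ − sΨ_s − s̄Ψ_s̄`. -/
def PiF (Ψ : ℝ → ℝ → ℝ) (p q : ℝ) : ℝ := Ψ p q - p * Ds Ψ p q - q * Dt Ψ p q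

/-- `J = (Ψ_ss Ψ_s̄s̄ − Ψ_ss̄²)/Π`. -/
def JF (Ψ : ℝ → ℝ → ℝ) (p q : ℝ) : ℝ :=
  (Ds (Ds Ψ) p q * Dt (Dt Ψ) p q - Dt (Ds Ψ) p q ^ 2) / PiF Ψ p q

/-- `Γ`, with `B = b²`, `G = g²`, `Θ = θ` as real parameters. -/
def GammaF (Ψ : ℝ → ℝ → ℝ) (B G Θ p q : ℝ) : ℝ :=
  PiF Ψ p q + (B - p ^ 2) * Ds (Ds Ψ) p q + (G - q ^ 2) * Dt (Dt Ψ) p q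
    + 2 * (Θ - p * q) * Dt (Ds Ψ) p q
    + ((B - p ^ 2) * (G - q ^ 2) - (Θ - p * q) ^ 2) * JF Ψ p q

/-- `ρ = Ψ(Ψ − sΨ_s − s̄Ψ_s̄)`. -/
def rhoF (Ψ : ℝ → ℝ → ℝ) : ℝ → ℝ → ℝ := fun p q => Ψ p q * PiF Ψ p q

/-- `ρ₀ = ΨΨ_ss + Ψ_s²`. -/
def rho0F (Ψ : ℝ → ℝ → ℝ) : ℝ → ℝ → ℝ := fun p q => Ψ p q * Ds (Ds Ψ) p q + Ds Ψ p q ^ 2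

/-- `ρ̄₀ = ΨΨ_s̄s̄ + Ψ_s̄²`. -/
def rhobar0F (Ψ : ℝ → ℝ → ℝ) : ℝ → ℝ → ℝ := fun p q => Ψ p q * Dt (Dt Ψ) p q + Dt Ψ p q ^ 2

/-- `ρ₃ = ΨΨ_ss̄ + Ψ_sΨ_s̄`. -/
def rho3F (Ψ : ℝ → ℝ → ℝ) : ℝ → ℝ → ℝ :=
  fun p q => Ψ p q * Dt (Ds Ψ) p q + Ds Ψ p q * Dt Ψ p q

/-- `ρ₁ = ΨΨ_s − sρ₀ − s̄ρ₃`. -/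
def rho1F (Ψ : ℝ → ℝ → ℝ) : ℝ → ℝ → ℝ :=
  fun p q => Ψ p q * Ds Ψ p q - p * rho0F Ψ p q - q * rho3F Ψ p q

/-- `ρ̄₁ = ΨΨ_s̄ − s̄ρ̄₀ − sρ₃`. -/
def rhobar1F (Ψ : ℝ → ℝ → ℝ) : ℝ → ℝ → ℝ :=
  fun p q => Ψ p q * Dt Ψ p q - q * rhobar0F Ψ p q - p * rho3F Ψ p q

/-- `ρ₂ = −sρ₁ − s̄ρ̄₁`. -/
def rho2F (Ψ : ℝ → ℝ → ℝ) : ℝ → ℝ → ℝ :=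
  fun p q => -p * rho1F Ψ p q - q * rhobar1F Ψ p q

/-- `π₁ = Ψ_s̄Ψ_ss̄ − Ψ_sΨ_s̄s̄ + sΨJ`. -/
def pi1F (Ψ : ℝ → ℝ → ℝ) (p q : ℝ) : ℝ :=
  Dt Ψ p q * Dt (Ds Ψ) p q - Ds Ψ p q * Dt (Dt Ψ) p q + p * Ψ p q * JF Ψ p q

/-- `π₂ = Ψ_sΨ_ss̄ − Ψ_s̄Ψ_ss + s̄ΨJ`. -/
def pi2F (Ψ : ℝ → ℝ → ℝ) (p q : ℝ) : ℝ :=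
  Ds Ψ p q * Dt (Ds Ψ) p q - Dt Ψ p q * Ds (Ds Ψ) p q + q * Ψ p q * JF Ψ p q


/-- Christoffel symbols `Γ^k_{ij}` of the Riemannian metric `a_{ij}(x)`. -/
def chr {n : ℕ} (a : (Fin n → ℝ) → Matrix (Fin n) (Fin n) ℝ) (x : Fin n → ℝ)
    (k i j : Fin n) : ℝ :=
  (1 / 2) * ∑ l, (a x)⁻¹ k l *
    (pd (fun z => a z j l) x i + pd (fun z => a z i l) x j - pd (fun z => a z i j) x l)

/-- Geodesic coefficients `^αG^i = ½ Γ^i_{jk} y^j y^k` of `α`. -/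
def alphaG {n : ℕ} (a : (Fin n → ℝ) → Matrix (Fin n) (Fin n) ℝ) (x y : Fin n → ℝ)
    (i : Fin n) : ℝ :=
  (1 / 2) * ∑ j, ∑ k, chr a x i j k * y j * y k

/-- Covariant derivative `v_{i|j}` of a 1-form `v` with respect to `α`. -/
def covD {n : ℕ} (a : (Fin n → ℝ) → Matrix (Fin n) (Fin n) ℝ)
    (v : (Fin n → ℝ) → Fin n → ℝ) (x : Fin n → ℝ) (i j : Fin n) : ℝ :=
  pd (fun z => v z i) x j - ∑ k, v x k * chr a x k i j

/-- `r_{ij} = ½(v_{i|j} + v_{j|i})`. -/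
def rSym {n : ℕ} (a : (Fin n → ℝ) → Matrix (Fin n) (Fin n) ℝ)
    (v : (Fin n → ℝ) → Fin n → ℝ) (x : Fin n → ℝ) (i j : Fin n) : ℝ :=
  (1 / 2) * (covD a v x i j + covD a v x j i)

/-- `s_{ij} = ½(v_{i|j} − v_{j|i})`. -/
def sSym {n : ℕ} (a : (Fin n → ℝ) → Matrix (Fin n) (Fin n) ℝ)
    (v : (Fin n → ℝ) → Fin n → ℝ) (x : Fin n → ℝ) (i j : Fin n) : ℝ :=
  (1 / 2) * (covD a v x i j - covD a v x j i)

/-- `r_{00} = r_{ij} y^i y^j`. -/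
def r00 {n : ℕ} (a : (Fin n → ℝ) → Matrix (Fin n) (Fin n) ℝ)
    (v : (Fin n → ℝ) → Fin n → ℝ) (x y : Fin n → ℝ) : ℝ :=
  ∑ i, ∑ j, rSym a v x i j * y i * y j

/-- `s_{j0} = s_{jk} y^k`. -/
def s0low {n : ℕ} (a : (Fin n → ℝ) → Matrix (Fin n) (Fin n) ℝ)
    (v : (Fin n → ℝ) → Fin n → ℝ) (x y : Fin n → ℝ) (j : Fin n) : ℝ :=
  ∑ k, sSym a v x j k * y k

/-- `s^i_0 = a^{ij} s_{j0}`. -/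
def sUp0 {n : ℕ} (a : (Fin n → ℝ) → Matrix (Fin n) (Fin n) ℝ)
    (v : (Fin n → ℝ) → Fin n → ℝ) (x y : Fin n → ℝ) (i : Fin n) : ℝ :=
  ∑ j, (a x)⁻¹ i j * s0low a v x y j

/-- Contraction `w_i · (s of v)^i_0`. -/
def contrS {n : ℕ} (a : (Fin n → ℝ) → Matrix (Fin n) (Fin n) ℝ)
    (v w : (Fin n → ℝ) → Fin n → ℝ) (x y : Fin n → ℝ) : ℝ :=
  ∑ i, w x i * sUp0 a v x y i

/-- Fundamental tensor of `F(x,·)` as a matrix. -/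
def gmatF {n : ℕ} (F : (Fin n → ℝ) → (Fin n → ℝ) → ℝ) (x y : Fin n → ℝ) :
    Matrix (Fin n) (Fin n) ℝ :=
  Matrix.of fun i j => fundT (F x) y i j

/-- Spray coefficients `G^i = ¼ g^{il}(∂g_{jl}/∂x^k + ∂g_{lk}/∂x^j − ∂g_{jk}/∂x^l) y^j y^k`. -/
def sprayF {n : ℕ} (F : (Fin n → ℝ) → (Fin n → ℝ) → ℝ) (x y : Fin n → ℝ) (i : Fin n) : ℝ :=
  (1 / 4) * ∑ l, (gmatF F x y)⁻¹ i l *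
    ∑ j, ∑ k, (pd (fun z => gmatF F z y j l) x k
        + pd (fun z => gmatF F z y l k) x j
        - pd (fun z => gmatF F z y j k) x l) * y j * y k

/-!
For a vector `V` at a point `y` of the fibre over `x`, let `D_V = y^k ∂/∂x^k - V^k ∂/∂y^k` and
`𝓛_V L = D_V (∂L/∂y) - ∂L/∂x`. Two observations give the identity.

* `𝓛_V L - 𝓛_W L` is the Hessian of `L` in `y` applied to `W - V`, and `𝓛_V F = 0` for `V = 2G`.
  Hence `ℓ_{ir} D^r` is `𝓛_V F` evaluated at `V = 2 ^αG`.
* For `V = 2 ^αG` one has `D_V α = 0`, `𝓛_V α = 0`, `D_V β = ^βr_00`, `(𝓛_V β)_i = 2 ^βs_{i0}`, and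
  the same for `γ`, so the chain rule computes `𝓛_V (α Ψ(β/α, γ/α))`.

That `𝓛_{2G} F = 0` follows from `𝓛_{2G} F² = 0` and Euler's identity, once the fundamental tensor
is known to be invertible: by homogeneity its kernel is controlled by that of the Hessian of `F`,
and `α` times this Hessian is `Π` times the angular metric of `α` plus a form of rank two in `h`,
`h̄`. The determinant of the `2 × 2` system deciding whether the sum degenerates off `ℝ y` is `Π Γ`.
-/

open Function (uncurry)
open scoped Topology Matrix

section PartialDerivatives

variable {n : ℕ} {f g : (Fin n → ℝ) → ℝ} {x : Fin n → ℝ}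

theorem fderiv_apply_eq_dotProduct (f : (Fin n → ℝ) → ℝ) (x u : Fin n → ℝ) :
    fderiv ℝ f x u = u ⬝ᵥ pd f x := by
  conv_lhs => rw [pi_eq_sum_univ' u, map_sum]
  simp [pd, dotProduct]

theorem pd_eq_of_hasFDerivAt {f' : (Fin n → ℝ) →L[ℝ] ℝ} (h : HasFDerivAt f f' x) (i : Fin n) :
    pd f x i = f' (Pi.single i 1) := by
  rw [pd, h.fderiv]

theorem pd_congr (h : f =ᶠ[𝓝 x] g) : pd f x = pd g x :=
  funext fun i => by rw [pd, pd, h.fderiv_eq]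

theorem pd_const_mul (hf : DifferentiableAt ℝ f x) (c : ℝ) (i : Fin n) :
    pd (fun z => c * f z) x i = c * pd f x i :=
  pd_eq_of_hasFDerivAt (hf.hasFDerivAt.const_mul c) i

theorem pd_mul (hf : DifferentiableAt ℝ f x) (hg : DifferentiableAt ℝ g x) (i : Fin n) :
    pd (fun z => f z * g z) x i = f x * pd g x i + pd f x i * g x := by
  refine (pd_eq_of_hasFDerivAt (hf.hasFDerivAt.mul hg.hasFDerivAt) i).trans ?_
  simp [pd, mul_comm]

theorem pd_sq (hf : DifferentiableAt ℝ f x) (i : Fin n) :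
    pd (fun z => f z ^ 2) x i = 2 * (f x * pd f x i) := by
  simp only [sq, pd_mul hf hf]
  ring

theorem pd_sum_mul_const {ι : Type*} {s : Finset ι} {φ : ι → (Fin n → ℝ) → ℝ}
    (hφ : ∀ j ∈ s, DifferentiableAt ℝ (φ j) x) (c : ι → ℝ) (i : Fin n) :
    pd (fun z => ∑ j ∈ s, φ j z * c j) x i = ∑ j ∈ s, pd (φ j) x i * c j := by
  rw [pd_eq_of_hasFDerivAt (HasFDerivAt.fun_sum fun j hj => (hφ j hj).hasFDerivAt.mul_const (c j))]
  simp [pd, mul_comm]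

theorem differentiableAt_pd (hf : ContDiffAt ℝ 2 f x) (i : Fin n) :
    DifferentiableAt ℝ (fun z => pd f z i) x :=
  ((hf.fderiv_right (m := 1) (by norm_num)).differentiableAt one_ne_zero).clm_apply
    (differentiableAt_const _)

theorem pd2_comm (hf : ContDiffAt ℝ 2 f x) (i j : Fin n) : pd2 f x i j = pd2 f x j i := by
  have hf' : DifferentiableAt ℝ (fderiv ℝ f) x :=
    (hf.fderiv_right (m := 1) (by norm_num)).differentiableAt one_ne_zero
  have pd2_eq (i j : Fin n) :
      pd2 f x i j = fderiv ℝ (fderiv ℝ f) x (Pi.single i 1) (Pi.single j 1) := by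
    refine (pd_eq_of_hasFDerivAt (hf'.hasFDerivAt.clm_apply (hasFDerivAt_const _ x)) i).trans ?_
    simp
  rw [pd2_eq, pd2_eq, hf.isSymmSndFDerivAt (by simp)]

theorem isSymm_of_pd2 (hf : ContDiffAt ℝ 2 f x) : (Matrix.of (pd2 f x)).IsSymm :=
  Matrix.IsSymm.ext fun i j => pd2_comm hf j i

end PartialDerivatives

section Homogeneity

/-- `f` is positively homogeneous of degree `k`; nothing is required for negative factors. -/
def PosHomogeneous {E : Type*} [SMul ℝ E] (k : ℕ) (f : E → ℝ) : Prop :=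
  ∀ t : ℝ, 0 < t → ∀ y, f (t • y) = t ^ k * f y

theorem PosHomogeneous.pow {E : Type*} [SMul ℝ E] {f : E → ℝ} {k : ℕ}
    (hf : PosHomogeneous k f) (m : ℕ) :
    PosHomogeneous (k * m) fun y => f y ^ m := fun t ht y => by
  simp only [hf t ht, mul_pow, pow_mul]

variable {n : ℕ} {f : (Fin n → ℝ) → ℝ} {k : ℕ}

theorem PosHomogeneous.pd (hf : PosHomogeneous (k + 1) f) (i : Fin n) :
    PosHomogeneous k fun y => pd f y i := fun t ht y => by
  have hfderiv : t • fderiv ℝ f (t • y) = t ^ (k + 1) • fderiv ℝ f y := by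
    have hfun : (fun z => f (t • z)) = t ^ (k + 1) • f := funext (hf t ht)
    rw [← fderiv_comp_smul, hfun, fderiv_const_smul_field, Pi.smul_apply]
  have := DFunLike.congr_fun hfderiv (Pi.single i 1)
  simp only [_root_.smul_apply, smul_eq_mul, pow_succ'] at this
  simpa only [_root_.pd, mul_assoc, mul_right_inj' ht.ne'] using this

theorem PosHomogeneous.euler (hf : PosHomogeneous k f) {y : Fin n → ℝ}
    (hd : DifferentiableAt ℝ f y) : y ⬝ᵥ _root_.pd f y = k * f y := by
  have hline : HasDerivAt (fun t : ℝ => f (t • y)) (fderiv ℝ f y y) 1 := by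
    have hsmul : HasDerivAt (fun t : ℝ => t • y) y 1 := by
      simpa using (hasDerivAt_id (1 : ℝ)).smul_const y
    exact HasFDerivAt.comp_hasDerivAt 1 (by simpa using hd.hasFDerivAt) hsmul
  have hpow : HasDerivAt (fun t : ℝ => f (t • y)) (k * f y) 1 := by
    have hmonomial : HasDerivAt (fun t : ℝ => t ^ k * f y) (k * f y) 1 := by
      simpa using (hasDerivAt_pow k (1 : ℝ)).mul_const (f y)
    refine hmonomial.congr_of_eventuallyEq ?_
    filter_upwards [lt_mem_nhds one_pos] with t ht using hf t ht y
  rw [← fderiv_apply_eq_dotProduct, hline.unique hpow]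

theorem PosHomogeneous.pd2_mulVec_self (hf : PosHomogeneous (k + 1) f) {y : Fin n → ℝ}
    (hd : ContDiffAt ℝ 2 f y) : Matrix.of (pd2 f y) *ᵥ y = (k : ℝ) • _root_.pd f y := by
  rw [← isSymm_of_pd2 hd, Matrix.mulVec_transpose]
  exact funext fun j => (hf.pd j).euler (differentiableAt_pd hd j)

end Homogeneity

section TangentBundle

variable {n : ℕ} {f g L : (Fin n → ℝ) → (Fin n → ℝ) → ℝ} {x y : Fin n → ℝ}

theorem fderiv_left_apply (hf : DifferentiableAt ℝ (uncurry f) (x, y)) (u : Fin n → ℝ) :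
    fderiv ℝ (fun z => f z y) x u = fderiv ℝ (uncurry f) (x, y) (u, 0) := by
  have : HasFDerivAt (fun z => f z y) _ x :=
    HasFDerivAt.comp (g := uncurry f) (f := fun z => (z, y)) x hf.hasFDerivAt
      (hasFDerivAt_prodMk_left x y)
  rw [this.fderiv]
  rfl

theorem fderiv_right_apply (hf : DifferentiableAt ℝ (uncurry f) (x, y)) (u : Fin n → ℝ) :
    fderiv ℝ (f x) y u = fderiv ℝ (uncurry f) (x, y) (0, u) := by
  have : HasFDerivAt (f x) _ y :=
    HasFDerivAt.comp (g := uncurry f) y hf.hasFDerivAt (hasFDerivAt_prodMk_right x y)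
  rw [this.fderiv]
  rfl

theorem contDiffAt_left {k : WithTop ℕ∞} (hf : ContDiffAt ℝ k (uncurry f) (x, y)) :
    ContDiffAt ℝ k (fun z => f z y) x :=
  hf.comp x (contDiffAt_id.prodMk contDiffAt_const)

theorem contDiffAt_right {k : WithTop ℕ∞} (hf : ContDiffAt ℝ k (uncurry f) (x, y)) :
    ContDiffAt ℝ k (f x) y :=
  hf.comp y (contDiffAt_const.prodMk contDiffAt_id)

theorem contDiffAt_uncurry_pd {k m : WithTop ℕ∞} (hf : ContDiffAt ℝ k (uncurry f) (x, y))
    (hmk : m + 1 ≤ k) (i : Fin n) : ContDiffAt ℝ m (uncurry fun z w => pd (f z) w i) (x, y) := by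
  have hf' : ContDiffAt ℝ k (uncurry fun (p : (Fin n → ℝ) × (Fin n → ℝ)) w => f p.1 w)
      ((x, y), y) :=
    ContDiffAt.comp (g := uncurry f) ((x, y), y) hf
      (contDiffAt_fst.fst.prodMk contDiffAt_snd)
  exact (hf'.fderiv contDiffAt_snd hmk).clm_apply contDiffAt_const

theorem eventually_contDiffAt_right {k : ℕ} (hf : ContDiffAt ℝ k (uncurry f) (x, y)) :
    ∀ᶠ p in 𝓝 (x, y), ContDiffAt ℝ k (f p.1) p.2 :=
  (hf.eventually (by simp)).mono fun _ => contDiffAt_right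

/-- The derivative of `f` at `(x, y)` along the spray vector `y^k ∂/∂x^k - V^k ∂/∂y^k`, where `V`
is the value at `(x, y)` of twice the spray coefficients. -/
def sprayDeriv (V : Fin n → ℝ) (f : (Fin n → ℝ) → (Fin n → ℝ) → ℝ) (x y : Fin n → ℝ) : ℝ :=
  fderiv ℝ (uncurry f) (x, y) (y, -V)

/-- The Euler–Lagrange expression `d/dt (∂L/∂y^i) - ∂L/∂x^i`, with `d/dt` the derivative along the
spray vector of `V`; it vanishes identically when `V` comes from the geodesic spray of `L`. -/
def lagrangeDeriv (V : Fin n → ℝ) (L : (Fin n → ℝ) → (Fin n → ℝ) → ℝ) (x y : Fin n → ℝ)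
    (i : Fin n) : ℝ :=
  sprayDeriv V (fun z w => pd (L z) w i) x y - pd (fun z => L z y) x i

theorem sprayDeriv_congr (V : Fin n → ℝ) (h : uncurry f =ᶠ[𝓝 (x, y)] uncurry g) :
    sprayDeriv V f x y = sprayDeriv V g x y := by
  rw [sprayDeriv, sprayDeriv, h.fderiv_eq]

theorem sprayDeriv_mul (V : Fin n → ℝ) (hf : DifferentiableAt ℝ (uncurry f) (x, y))
    (hg : DifferentiableAt ℝ (uncurry g) (x, y)) :
    sprayDeriv V (fun z w => f z w * g z w) x y =
      f x y * sprayDeriv V g x y + g x y * sprayDeriv V f x y := by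
  have : HasFDerivAt (uncurry fun z w => f z w * g z w) _ (x, y) :=
    hf.hasFDerivAt.mul hg.hasFDerivAt
  simp [sprayDeriv, this.fderiv]

theorem sprayDeriv_const_mul (V : Fin n → ℝ) (hf : DifferentiableAt ℝ (uncurry f) (x, y)) (c : ℝ) :
    sprayDeriv V (fun z w => c * f z w) x y = c * sprayDeriv V f x y := by
  have : HasFDerivAt (uncurry fun z w => c * f z w) _ (x, y) := hf.hasFDerivAt.const_mul c
  simp [sprayDeriv, this.fderiv]

theorem sprayDeriv_eq_dotProduct_sub (V : Fin n → ℝ)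
    (hf : DifferentiableAt ℝ (uncurry f) (x, y)) :
    sprayDeriv V f x y = y ⬝ᵥ pd (fun z => f z y) x - V ⬝ᵥ pd (f x) y := by
  rw [← fderiv_apply_eq_dotProduct, ← fderiv_apply_eq_dotProduct, fderiv_left_apply hf,
    fderiv_right_apply hf, ← map_sub]
  simp [sprayDeriv]

theorem sprayDeriv_sub_sprayDeriv (V W : Fin n → ℝ)
    (hf : DifferentiableAt ℝ (uncurry f) (x, y)) :
    sprayDeriv V f x y - sprayDeriv W f x y = (W - V) ⬝ᵥ pd (f x) y := by
  rw [← fderiv_apply_eq_dotProduct, fderiv_right_apply hf, sprayDeriv, sprayDeriv, ← map_sub]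
  congr 1
  simp [sub_eq_neg_add, add_comm]

theorem sprayDeriv_dotProduct (V : Fin n → ℝ) {φ : (Fin n → ℝ) → (Fin n → ℝ) → Fin n → ℝ}
    (hφ : ∀ l, DifferentiableAt ℝ (uncurry fun z w => φ z w l) (x, y)) :
    sprayDeriv V (fun z w => w ⬝ᵥ φ z w) x y =
      y ⬝ᵥ (fun l => sprayDeriv V (fun z w => φ z w l) x y) - V ⬝ᵥ φ x y := by
  have hcoord (l : Fin n) : HasFDerivAt (fun p : (Fin n → ℝ) × (Fin n → ℝ) => p.2 l)
      ((ContinuousLinearMap.proj l).comp (ContinuousLinearMap.snd ℝ (Fin n → ℝ) (Fin n → ℝ)))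
      (x, y) :=
    hasFDerivAt_pi'.1 hasFDerivAt_snd l
  have : HasFDerivAt (uncurry fun z w => w ⬝ᵥ φ z w) _ (x, y) :=
    HasFDerivAt.fun_sum (u := Finset.univ) fun l _ => (hcoord l).mul (hφ l).hasFDerivAt
  rw [sprayDeriv, this.fderiv]
  simp [sprayDeriv, dotProduct, Finset.sum_add_distrib, sub_eq_add_neg, mul_comm]

theorem pd2_mulVec_sub (V W : Fin n → ℝ) (hL : ContDiffAt ℝ 2 (uncurry L) (x, y)) :
    Matrix.of (pd2 (L x) y) *ᵥ (W - V) = lagrangeDeriv V L x y - lagrangeDeriv W L x y := by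
  rw [← isSymm_of_pd2 (contDiffAt_right hL), Matrix.mulVec_transpose]
  ext i
  have hLi := (contDiffAt_uncurry_pd (m := 1) hL (by norm_num) i).differentiableAt one_ne_zero
  rw [Pi.sub_apply, lagrangeDeriv, lagrangeDeriv, sub_sub_sub_cancel_right,
    sprayDeriv_sub_sprayDeriv V W hLi]
  rfl

/-- Differentiate Euler's identity `y^l ∂L/∂y^l = (k + 1) L` along the spray vector. -/
theorem dotProduct_lagrangeDeriv {k : ℕ} (V : Fin n → ℝ)
    (hL : ContDiffAt ℝ 2 (uncurry L) (x, y)) (hhom : ∀ z, PosHomogeneous (k + 1) (L z)) :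
    y ⬝ᵥ lagrangeDeriv V L x y = k * sprayDeriv V L x y := by
  have hL' := hL.differentiableAt two_ne_zero
  have hLl (l : Fin n) :=
    (contDiffAt_uncurry_pd (m := 1) hL (by norm_num) l).differentiableAt one_ne_zero
  have heuler : uncurry (fun z w => w ⬝ᵥ pd (L z) w) =ᶠ[𝓝 (x, y)]
      uncurry fun z w => ((k + 1 : ℕ) : ℝ) * L z w := by
    filter_upwards [eventually_contDiffAt_right (k := 2) hL] with p hp
    exact (hhom p.1).euler (hp.differentiableAt two_ne_zero)
  have hderiv := sprayDeriv_congr V heuler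
  rw [sprayDeriv_dotProduct V hLl, sprayDeriv_const_mul V hL'] at hderiv
  have hsplit := sprayDeriv_eq_dotProduct_sub V hL'
  have hlagr : lagrangeDeriv V L x y =
      (fun l => sprayDeriv V (fun z w => pd (L z) w l) x y) - pd (fun z => L z y) x := rfl
  rw [hlagr, dotProduct_sub]
  push_cast at hderiv
  linear_combination hderiv + hsplit

theorem lagrangeDeriv_sq (V : Fin n → ℝ) (hL : ContDiffAt ℝ 2 (uncurry L) (x, y)) (i : Fin n) :
    lagrangeDeriv V (fun z w => L z w ^ 2) x y i =
      2 * L x y * lagrangeDeriv V L x y i + 2 * sprayDeriv V L x y * pd (L x) y i := by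
  have hL' := hL.differentiableAt two_ne_zero
  have hLi := (contDiffAt_uncurry_pd (m := 1) hL (by norm_num) i).differentiableAt one_ne_zero
  have hpd : uncurry (fun z w => pd (fun v => L z v ^ 2) w i) =ᶠ[𝓝 (x, y)]
      uncurry fun z w => 2 * (L z w * pd (L z) w i) := by
    filter_upwards [eventually_contDiffAt_right (k := 2) hL] with p hp
    exact pd_sq (hp.differentiableAt two_ne_zero) i
  have hmul : DifferentiableAt ℝ (uncurry fun z w => L z w * pd (L z) w i) (x, y) := hL'.mul hLi
  have hbase := (contDiffAt_left hL).differentiableAt two_ne_zero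
  rw [lagrangeDeriv, sprayDeriv_congr V hpd, sprayDeriv_const_mul V hmul,
    sprayDeriv_mul V hL' hLi, pd_sq hbase, lagrangeDeriv]
  ring

end TangentBundle

section Finsler

variable {n : ℕ} {F : (Fin n → ℝ) → (Fin n → ℝ) → ℝ} {x y : Fin n → ℝ}

theorem gmatF_eq (hF : ContDiffAt ℝ 2 (F x) y) :
    gmatF F x y =
      F x y • Matrix.of (pd2 (F x) y) + Matrix.vecMulVec (pd (F x) y) (pd (F x) y) := by
  ext i j
  have hF' := hF.differentiableAt two_ne_zero
  have hFj := differentiableAt_pd hF j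
  have hpd : (fun w => pd (fun v => F x v ^ 2) w j) =ᶠ[𝓝 y]
      fun w => 2 * (F x w * pd (F x) w j) := by
    filter_upwards [hF.eventually (by simp)] with w hw
    exact pd_sq (hw.differentiableAt two_ne_zero) j
  have hfund : fundT (F x) y i j = 1 / 2 * (2 * pd (fun w => F x w * pd (F x) w j) y i) := by
    rw [fundT, pd2, pd_congr hpd, pd_const_mul (hF'.fun_mul hFj)]
  simp only [gmatF, Matrix.of_apply, hfund, pd_mul hF' hFj, Matrix.add_apply, Matrix.smul_apply,
    smul_eq_mul, Matrix.vecMulVec_apply, pd2]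
  ring

theorem gmatF_isSymm (hF : ContDiffAt ℝ 2 (F x) y) : (gmatF F x y).IsSymm := by
  rw [gmatF_eq hF]
  exact ((isSymm_of_pd2 hF).smul _).add (Matrix.transpose_vecMulVec _ _)

theorem gmatF_mulVec_self (hF : ContDiffAt ℝ 2 (F x) y) (hhom : PosHomogeneous 1 (F x)) :
    gmatF F x y *ᵥ y = F x y • pd (F x) y := by
  rw [gmatF_eq hF, Matrix.add_mulVec, Matrix.smul_mulVec, hhom.pd2_mulVec_self (k := 0) hF,
    Matrix.vecMulVec_mulVec, dotProduct_comm, hhom.euler (hF.differentiableAt two_ne_zero)]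
  simp

theorem dotProduct_gmatF_mulVec_self (hF : ContDiffAt ℝ 2 (F x) y)
    (hhom : PosHomogeneous 1 (F x)) : y ⬝ᵥ gmatF F x y *ᵥ y = F x y ^ 2 := by
  rw [gmatF_mulVec_self hF hhom, dotProduct_smul, hhom.euler (hF.differentiableAt two_ne_zero)]
  simp [sq]

theorem det_gmatF_ne_zero (hF : ContDiffAt ℝ 2 (F x) y) (hhom : PosHomogeneous 1 (F x))
    (hF0 : F x y ≠ 0)
    (hker : ∀ v : Fin n → ℝ, Matrix.of (pd2 (F x) y) *ᵥ v = 0 → ∃ t : ℝ, v = t • y) :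
    (gmatF F x y).det ≠ 0 := by
  intro hdet
  obtain ⟨v, hv0, hv⟩ := Matrix.exists_mulVec_eq_zero_iff.mpr hdet
  have hdir : pd (F x) y ⬝ᵥ v = 0 := by
    have hpair : (gmatF F x y *ᵥ y) ⬝ᵥ v = 0 := by
      rw [← gmatF_isSymm hF, Matrix.mulVec_transpose, ← Matrix.dotProduct_mulVec, hv,
        dotProduct_zero]
    rw [gmatF_mulVec_self hF hhom, smul_dotProduct] at hpair
    exact (smul_eq_zero.mp hpair).resolve_left hF0
  obtain ⟨t, rfl⟩ := hker v <| by
    rw [gmatF_eq hF, Matrix.add_mulVec, Matrix.vecMulVec_mulVec, hdir, Matrix.smul_mulVec] at hv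
    simpa [hF0] using hv
  rw [dotProduct_smul, dotProduct_comm, hhom.euler (hF.differentiableAt two_ne_zero)] at hdir
  have ht : t = 0 := by simpa [hF0] using hdir
  exact hv0 (by rw [ht, zero_smul])

theorem sum_christoffel_eq {g : (Fin n → ℝ) → Matrix (Fin n) (Fin n) ℝ}
    (hg : ∀ j k, DifferentiableAt ℝ (fun z => g z j k) x) (hsymm : ∀ᶠ z in 𝓝 x, (g z).IsSymm)
    (y : Fin n → ℝ) (l : Fin n) :
    ∑ j, ∑ k, (pd (fun z => g z j l) x k + pd (fun z => g z l k) x j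
        - pd (fun z => g z j k) x l) * y j * y k =
      2 * y ⬝ᵥ pd (fun z => (g z *ᵥ y) l) x - pd (fun z => y ⬝ᵥ g z *ᵥ y) x l := by
  have hswap (j k : Fin n) : pd (fun z => g z j l) x k = pd (fun z => g z l j) x k :=
    congrFun (pd_congr (hsymm.mono fun z hz => hz.apply l j)) k
  have hrow (i k : Fin n) : pd (fun z => (g z *ᵥ y) i) x k = ∑ j, pd (fun z => g z i j) x k * y j :=
    pd_sum_mul_const (s := Finset.univ) (fun j _ => hg i j) y k
  have hquad : pd (fun z => y ⬝ᵥ g z *ᵥ y) x l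
      = ∑ j, ∑ k, pd (fun z => g z j k) x l * y j * y k := by
    simp only [dotProduct_comm y]
    refine (pd_sum_mul_const (s := Finset.univ) (φ := fun j z => (g z *ᵥ y) j)
      (fun j _ => DifferentiableAt.fun_sum (u := Finset.univ)
        fun k _ => (hg j k).mul_const (y k)) y l).trans ?_
    simp only [hrow, Finset.sum_mul, mul_right_comm]
  have hleft : ∑ j, ∑ k, pd (fun z => g z l j) x k * y j * y k =
      y ⬝ᵥ pd (fun z => (g z *ᵥ y) l) x := by
    rw [Finset.sum_comm, dotProduct_comm]
    simp only [dotProduct, hrow, Finset.sum_mul]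
  have hright : ∑ j, ∑ k, pd (fun z => g z l k) x j * y j * y k =
      y ⬝ᵥ pd (fun z => (g z *ᵥ y) l) x := by
    rw [dotProduct_comm]
    simp only [dotProduct, hrow, Finset.sum_mul, mul_right_comm _ (y _) (y _)]
  simp only [hswap, hquad, add_mul, sub_mul, Finset.sum_add_distrib, Finset.sum_sub_distrib,
    hleft, hright]
  ring

theorem gmatF_mulVec_sprayF (hdet : (gmatF F x y).det ≠ 0) (l : Fin n) :
    (gmatF F x y *ᵥ (4 : ℝ) • sprayF F x y) l =
      ∑ j, ∑ k, (pd (fun z => gmatF F z y j l) x k + pd (fun z => gmatF F z y l k) x j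
        - pd (fun z => gmatF F z y j k) x l) * y j * y k := by
  have hspray : (4 : ℝ) • sprayF F x y = (gmatF F x y)⁻¹ *ᵥ fun l =>
      ∑ j, ∑ k, (pd (fun z => gmatF F z y j l) x k + pd (fun z => gmatF F z y l k) x j
        - pd (fun z => gmatF F z y j k) x l) * y j * y k := by
    ext i
    simp only [Pi.smul_apply, smul_eq_mul, sprayF, Matrix.mulVec, dotProduct]
    ring
  rw [hspray, Matrix.mulVec_mulVec, Matrix.mul_nonsing_inv _ hdet.isUnit, Matrix.one_mulVec]

theorem lagrangeDeriv_sprayF_sq (hF : ContDiffAt ℝ 3 (uncurry F) (x, y))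
    (hhom : ∀ z, PosHomogeneous 1 (F z)) (hdet : (gmatF F x y).det ≠ 0) :
    lagrangeDeriv ((2 : ℝ) • sprayF F x y) (fun z w => F z w ^ 2) x y = 0 := by
  ext l
  have hE : ContDiffAt ℝ 3 (uncurry fun z w => F z w ^ 2) (x, y) := hF.pow 2
  have hEl := contDiffAt_uncurry_pd (m := 2) hE (by norm_num) l
  have hEl' := hEl.differentiableAt two_ne_zero
  have hg (j k : Fin n) : DifferentiableAt ℝ (fun z => gmatF F z y j k) x :=
    ((contDiffAt_left (contDiffAt_uncurry_pd (m := 1) (contDiffAt_uncurry_pd (m := 2) hE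
      (by norm_num) k) (by norm_num) j)).differentiableAt one_ne_zero).const_mul (1 / 2)
  have hFz : ∀ᶠ z in 𝓝 x, ContDiffAt ℝ 2 (F z) y :=
    ((continuousAt_id.prodMk continuousAt_const).eventually
      (eventually_contDiffAt_right (k := 3) hF)).mono fun z hz => hz.of_le (by norm_num)
  have hmulVec : pd (fun z => (gmatF F z y *ᵥ y) l) x =
      (1 / 2 : ℝ) • pd (fun z => pd (fun w => F z w ^ 2) y l) x := by
    ext i
    refine (congrFun (pd_congr ?_) i).trans
      (pd_const_mul ((contDiffAt_left hEl).differentiableAt two_ne_zero) (1 / 2) i)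
    filter_upwards [hFz] with z hz
    rw [gmatF_mulVec_self hz (hhom z), pd_sq (hz.differentiableAt two_ne_zero)]
    simp
  have hquad : pd (fun z => y ⬝ᵥ gmatF F z y *ᵥ y) x = pd (fun z => F z y ^ 2) x :=
    pd_congr (hFz.mono fun z hz => dotProduct_gmatF_mulVec_self hz (hhom z))
  have hvert : ((2 : ℝ) • sprayF F x y) ⬝ᵥ pd (fun w => pd (fun v => F x v ^ 2) w l) y =
      (gmatF F x y *ᵥ (4 : ℝ) • sprayF F x y) l := by
    rw [← gmatF_isSymm hFz.self_of_nhds, Matrix.mulVec_transpose]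
    simp only [dotProduct, Matrix.vecMul, gmatF, Matrix.of_apply, fundT, pd2, Pi.smul_apply,
      smul_eq_mul]
    exact Finset.sum_congr rfl fun r _ => by ring
  rw [lagrangeDeriv, sprayDeriv_eq_dotProduct_sub _ hEl', hvert, gmatF_mulVec_sprayF hdet,
    sum_christoffel_eq hg (hFz.mono fun z hz => gmatF_isSymm hz), hmulVec, hquad, dotProduct_smul,
    Pi.zero_apply, smul_eq_mul]
  ring

theorem sprayDeriv_sprayF (hF : ContDiffAt ℝ 3 (uncurry F) (x, y))
    (hhom : ∀ z, PosHomogeneous 1 (F z)) (hF0 : F x y ≠ 0) (hdet : (gmatF F x y).det ≠ 0) :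
    sprayDeriv ((2 : ℝ) • sprayF F x y) F x y = 0 := by
  have hF2 : ContDiffAt ℝ 2 (uncurry F) (x, y) := hF.of_le (by norm_num)
  have hF1 := hF.differentiableAt three_ne_zero
  have henergy := dotProduct_lagrangeDeriv (k := 1) ((2 : ℝ) • sprayF F x y)
    (L := fun z w => F z w ^ 2) (hF2.pow 2) fun z => (hhom z).pow 2
  rw [lagrangeDeriv_sprayF_sq hF hhom hdet, dotProduct_zero] at henergy
  simp only [sq, sprayDeriv_mul _ hF1 hF1, Nat.cast_one, one_mul] at henergy
  have : F x y * sprayDeriv ((2 : ℝ) • sprayF F x y) F x y = 0 := by linarith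
  exact (mul_eq_zero.mp this).resolve_left hF0

theorem lagrangeDeriv_sprayF (hF : ContDiffAt ℝ 3 (uncurry F) (x, y))
    (hhom : ∀ z, PosHomogeneous 1 (F z)) (hF0 : F x y ≠ 0) (hdet : (gmatF F x y).det ≠ 0) :
    lagrangeDeriv ((2 : ℝ) • sprayF F x y) F x y = 0 := by
  ext i
  have hsq := congrFun (lagrangeDeriv_sprayF_sq hF hhom hdet) i
  rw [lagrangeDeriv_sq _ (hF.of_le (by norm_num)), sprayDeriv_sprayF hF hhom hF0 hdet] at hsq
  simpa [hF0] using hsq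

end Finsler

section OneForm

variable {n : ℕ}

theorem hasFDerivAt_oneForm (v y : Fin n → ℝ) :
    HasFDerivAt (oneForm v) (∑ i, v i • ContinuousLinearMap.proj (R := ℝ) (φ := fun _ => ℝ) i) y :=
  HasFDerivAt.fun_sum fun i _ => (hasFDerivAt_apply i y).const_mul (v i)

theorem pd_oneForm (v y : Fin n → ℝ) : pd (oneForm v) y = v :=
  funext fun i => by simp [pd_eq_of_hasFDerivAt (hasFDerivAt_oneForm v y), Pi.single_apply]

theorem contDiffAt_oneForm {k : WithTop ℕ∞} {v : (Fin n → ℝ) → Fin n → ℝ} {x : Fin n → ℝ}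
    (hv : ∀ i, ContDiffAt ℝ k (fun z => v z i) x) (y : Fin n → ℝ) :
    ContDiffAt ℝ k (uncurry fun z => oneForm (v z)) (x, y) :=
  ContDiffAt.sum (s := Finset.univ) fun i _ =>
    (ContDiffAt.comp (g := fun z => v z i) (x, y) (hv i) contDiffAt_fst).mul
      (contDiffAt_pi.mp contDiffAt_snd i)

end OneForm

section RiemannianMetric

variable {n : ℕ}

theorem quadInv_eq_dotProduct (a : Matrix (Fin n) (Fin n) ℝ) (u v : Fin n → ℝ) :
    quadInv a u v = u ⬝ᵥ a⁻¹ *ᵥ v := by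
  simp only [quadInv, dotProduct, Matrix.mulVec, Finset.mul_sum]
  exact Finset.sum_congr rfl fun i _ => Finset.sum_congr rfl fun j _ => by ring

theorem posHomogeneous_alph (a : Matrix (Fin n) (Fin n) ℝ) : PosHomogeneous 1 (alph a) := by
  intro t ht y
  have hscale : ∑ i, ∑ j, a i j * (t • y) i * (t • y) j = t ^ 2 * ∑ i, ∑ j, a i j * y i * y j := by
    simp only [Finset.mul_sum, Pi.smul_apply, smul_eq_mul]
    exact Finset.sum_congr rfl fun i _ => Finset.sum_congr rfl fun j _ => by ring
  rw [alph, hscale, Real.sqrt_mul (sq_nonneg t), Real.sqrt_sq ht.le, pow_one, alph]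

section Fiber

variable {a : Matrix (Fin n) (Fin n) ℝ} {y : Fin n → ℝ}

theorem sum_sum_eq_dotProduct_mulVec (a : Matrix (Fin n) (Fin n) ℝ) (y : Fin n → ℝ) :
    ∑ i, ∑ j, a i j * y i * y j = y ⬝ᵥ a *ᵥ y := by
  simp only [dotProduct, Matrix.mulVec, Finset.mul_sum]
  exact Finset.sum_congr rfl fun i _ => Finset.sum_congr rfl fun j _ => by ring

theorem alph_pos (ha : a.PosDef) (hy : y ≠ 0) : 0 < alph a y := by
  rw [alph, sum_sum_eq_dotProduct_mulVec]
  exact Real.sqrt_pos.mpr (ha.dotProduct_mulVec_pos hy)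

theorem alph_sq (ha : a.PosDef) (y : Fin n → ℝ) : alph a y ^ 2 = y ⬝ᵥ a *ᵥ y := by
  rw [alph, sum_sum_eq_dotProduct_mulVec]
  exact Real.sq_sqrt (ha.posSemidef.dotProduct_mulVec_nonneg y)

theorem pd_alph_sq (ha : a.PosDef) (y : Fin n → ℝ) :
    pd (fun w => alph a w ^ 2) y = (2 : ℝ) • a *ᵥ y := by
  have hsymm : aᵀ = a := ha.isHermitian.eq
  have hquad : HasFDerivAt (fun w => w ⬝ᵥ a *ᵥ w) _ y :=
    HasFDerivAt.fun_sum (u := Finset.univ) fun i _ =>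
      (hasFDerivAt_apply i y).mul (hasFDerivAt_oneForm (a i) y)
  have hcol (j : Fin n) : ∑ i, y i * a i j = (a *ᵥ y) j := by
    conv_rhs => rw [← hsymm]
    simp only [Matrix.mulVec, dotProduct, Matrix.transpose_apply, mul_comm]
  ext j
  simp only [alph_sq ha]
  rw [pd_eq_of_hasFDerivAt hquad]
  simp [Pi.single_apply, Finset.sum_add_distrib, hcol, two_mul, Matrix.mulVec, dotProduct]

end Fiber

variable {a : (Fin n → ℝ) → Matrix (Fin n) (Fin n) ℝ} {x y : Fin n → ℝ}

theorem gmatF_alph (ha : (a x).PosDef) (y : Fin n → ℝ) : gmatF (fun z => alph (a z)) x y = a x := by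
  ext i j
  have hlin : (fun w => pd (fun v => alph (a x) v ^ 2) w j) = fun w => 2 * oneForm (a x j) w :=
    funext fun w => congrFun (pd_alph_sq ha w) j
  have hd : DifferentiableAt ℝ (oneForm (a x j)) y := (hasFDerivAt_oneForm _ y).differentiableAt
  rw [gmatF, Matrix.of_apply, fundT, pd2, hlin, pd_const_mul hd, pd_oneForm, ← ha.isHermitian.apply]
  simp

theorem sprayF_alph (ha : ∀ᶠ z in 𝓝 x, (a z).PosDef) (y : Fin n → ℝ) :
    sprayF (fun z => alph (a z)) x y = alphaG a x y := by
  have hpd (j k : Fin n) : pd (fun z => gmatF (fun z => alph (a z)) z y j k) x =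
      pd (fun z => a z j k) x :=
    pd_congr (ha.mono fun z hz => congrFun₂ (gmatF_alph hz y) j k)
  have hswap (l k : Fin n) : pd (fun z => a z l k) x = pd (fun z => a z k l) x :=
    pd_congr (ha.mono fun z hz => hz.isHermitian.apply k l)
  ext i
  simp only [sprayF, alphaG, chr, hpd, gmatF_alph ha.self_of_nhds, Finset.mul_sum, Finset.sum_mul]
  rw [Finset.sum_comm]
  refine Finset.sum_congr rfl fun j _ => ?_
  rw [Finset.sum_comm]
  refine Finset.sum_congr rfl fun k _ => Finset.sum_congr rfl fun l _ => ?_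
  rw [hswap l k]
  ring

theorem contDiffAt_alph {k : WithTop ℕ∞} (haS : ∀ i j, ContDiffAt ℝ k (fun z => a z i j) x)
    (ha : (a x).PosDef) (hy : y ≠ 0) :
    ContDiffAt ℝ k (uncurry fun z => alph (a z)) (x, y) := by
  have hcoord (i : Fin n) : ContDiffAt ℝ k (fun p : (Fin n → ℝ) × (Fin n → ℝ) => p.2 i) (x, y) :=
    contDiffAt_pi.mp contDiffAt_snd i
  have hquad : ContDiffAt ℝ k
      (fun p : (Fin n → ℝ) × (Fin n → ℝ) => ∑ i, ∑ j, a p.1 i j * p.2 i * p.2 j) (x, y) :=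
    ContDiffAt.sum fun i _ => ContDiffAt.sum fun j _ =>
      ((ContDiffAt.comp (g := fun z => a z i j) (x, y) (haS i j) contDiffAt_fst).mul
        (hcoord i)).mul (hcoord j)
  exact hquad.sqrt (Real.sqrt_ne_zero'.mp (alph_pos ha hy).ne').ne'

theorem sprayDeriv_alph (haS : ∀ i j, ContDiffAt ℝ 3 (fun z => a z i j) x)
    (ha : ∀ᶠ z in 𝓝 x, (a z).PosDef) (hy : y ≠ 0) :
    sprayDeriv ((2 : ℝ) • alphaG a x y) (fun z => alph (a z)) x y = 0 := by
  have hax := ha.self_of_nhds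
  rw [← sprayF_alph ha]
  exact sprayDeriv_sprayF (contDiffAt_alph haS hax hy) (fun z => posHomogeneous_alph (a z))
    (alph_pos hax hy).ne' (by rw [gmatF_alph hax]; exact hax.det_pos.ne')

theorem lagrangeDeriv_alph (haS : ∀ i j, ContDiffAt ℝ 3 (fun z => a z i j) x)
    (ha : ∀ᶠ z in 𝓝 x, (a z).PosDef) (hy : y ≠ 0) :
    lagrangeDeriv ((2 : ℝ) • alphaG a x y) (fun z => alph (a z)) x y = 0 := by
  have hax := ha.self_of_nhds
  rw [← sprayF_alph ha]
  exact lagrangeDeriv_sprayF (contDiffAt_alph haS hax hy) (fun z => posHomogeneous_alph (a z))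
    (alph_pos hax hy).ne' (by rw [gmatF_alph hax]; exact hax.det_pos.ne')

section AngularMetric

variable {a : Matrix (Fin n) (Fin n) ℝ}

theorem contDiffAt_alph_fiber {k : WithTop ℕ∞} (ha : a.PosDef) (hy : y ≠ 0) :
    ContDiffAt ℝ k (alph a) y :=
  contDiffAt_right
    (contDiffAt_alph (a := fun _ => a) (x := 0) (fun _ _ => contDiffAt_const) ha hy)

theorem mulVec_self_eq_alph_smul_pd (ha : a.PosDef) (hy : y ≠ 0) :
    a *ᵥ y = alph a y • pd (alph a) y := by
  have hα : DifferentiableAt ℝ (alph a) y :=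
    (contDiffAt_alph_fiber ha hy).differentiableAt one_ne_zero
  ext j
  have hsq := congrFun (pd_alph_sq ha y) j
  rw [pd_sq hα] at hsq
  simpa using hsq.symm

theorem pd_alph_dotProduct_self (ha : a.PosDef) (hy : y ≠ 0) : pd (alph a) y ⬝ᵥ y = alph a y := by
  have hsq := alph_sq ha y
  rw [mulVec_self_eq_alph_smul_pd ha hy, dotProduct_smul, smul_eq_mul, sq, dotProduct_comm] at hsq
  exact (mul_left_cancel₀ (alph_pos ha hy).ne' hsq).symm

theorem inv_mulVec_pd_alph (ha : a.PosDef) (hy : y ≠ 0) :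
    a⁻¹ *ᵥ pd (alph a) y = (alph a y)⁻¹ • y := by
  have hinv : a⁻¹ *ᵥ (a *ᵥ y) = y := by
    rw [Matrix.mulVec_mulVec, Matrix.nonsing_inv_mul _ ha.det_pos.ne'.isUnit, Matrix.one_mulVec]
  rw [mulVec_self_eq_alph_smul_pd ha hy, Matrix.mulVec_smul] at hinv
  rw [eq_inv_smul_iff₀ (alph_pos ha hy).ne', hinv]

theorem alph_smul_pd2_mulVec (ha : a.PosDef) (hy : y ≠ 0) (v : Fin n → ℝ) :
    alph a y • Matrix.of (pd2 (alph a) y) *ᵥ v =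
      a *ᵥ v - (pd (alph a) y ⬝ᵥ v) • pd (alph a) y := by
  have hgmat := congrArg (· *ᵥ v)
    (gmatF_eq (F := fun _ => alph a) (x := y) (contDiffAt_alph_fiber ha hy))
  simp only [gmatF_alph (a := fun _ => a) ha, Matrix.add_mulVec, Matrix.vecMulVec_mulVec,
    Matrix.smul_mulVec, op_smul_eq_smul] at hgmat
  rw [hgmat, add_sub_cancel_right]

theorem hl_eq (a : Matrix (Fin n) (Fin n) ℝ) (v y : Fin n → ℝ) :
    hl a v y = v - sVar a v y • pd (alph a) y :=
  rfl

theorem hl_dotProduct_self (ha : a.PosDef) (hy : y ≠ 0) (v : Fin n → ℝ) : hl a v y ⬝ᵥ y = 0 := by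
  rw [hl_eq, sub_dotProduct, smul_dotProduct, pd_alph_dotProduct_self ha hy, smul_eq_mul, sVar,
    div_mul_cancel₀ _ (alph_pos ha hy).ne']
  exact sub_self _

theorem quadInv_hl_hl (ha : a.PosDef) (hy : y ≠ 0) (u v : Fin n → ℝ) :
    quadInv a (hl a u y) (hl a v y) = quadInv a u v - sVar a u y * sVar a v y := by
  have hα := (alph_pos ha hy).ne'
  have hsVar (u : Fin n → ℝ) : u ⬝ᵥ a⁻¹ *ᵥ pd (alph a) y = sVar a u y := by
    rw [inv_mulVec_pd_alph ha hy, dotProduct_smul, smul_eq_mul, inv_mul_eq_div]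
    rfl
  have hsVar' (v : Fin n → ℝ) : pd (alph a) y ⬝ᵥ a⁻¹ *ᵥ v = sVar a v y := by
    rw [Matrix.dotProduct_mulVec, ← Matrix.mulVec_transpose, Matrix.transpose_nonsing_inv,
      show aᵀ = a from ha.isHermitian.eq, dotProduct_comm, hsVar]
  have hself : sVar a (pd (alph a) y) y = 1 := by
    rw [sVar, show oneForm _ y = pd (alph a) y ⬝ᵥ y from rfl, pd_alph_dotProduct_self ha hy,
      div_self hα]
  simp only [quadInv_eq_dotProduct, hl_eq, Matrix.mulVec_sub, Matrix.mulVec_smul, sub_dotProduct,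
    dotProduct_sub, smul_dotProduct, dotProduct_smul, smul_eq_mul]
  rw [hsVar u, hsVar' v, hsVar, hself]
  ring

theorem sVar_mem_Ioo (ha : a.PosDef) (hy : y ≠ 0) {v : Fin n → ℝ} {c : ℝ}
    (hv : Real.sqrt (quadInv a v v) < c) : sVar a v y ∈ Ioo (-c) c := by
  have hnonneg : 0 ≤ quadInv a (hl a v y) (hl a v y) := by
    rw [quadInv_eq_dotProduct]
    exact ha.inv.posSemidef.dotProduct_mulVec_nonneg _
  rw [quadInv_hl_hl ha hy, ← sq, sub_nonneg] at hnonneg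
  exact abs_lt.mp ((Real.abs_le_sqrt hnonneg).trans_lt hv)

end AngularMetric

section CovariantDerivative

variable {v : (Fin n → ℝ) → Fin n → ℝ}

theorem pd_oneForm_left (hv : ∀ i, DifferentiableAt ℝ (fun z => v z i) x) (y : Fin n → ℝ)
    (j : Fin n) : pd (fun z => oneForm (v z) y) x j = ∑ i, pd (fun z => v z i) x j * y i :=
  pd_sum_mul_const (fun i _ => hv i) y j

theorem chr_comm (ha : ∀ᶠ z in 𝓝 x, (a z).IsSymm) (k i j : Fin n) :
    chr a x k i j = chr a x k j i := by
  have hswap : pd (fun z => a z i j) x = pd (fun z => a z j i) x :=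
    pd_congr (ha.mono fun z hz => hz.apply j i)
  simp only [chr, hswap, add_comm (pd (fun z => a z j _) x i)]

theorem lagrangeDeriv_oneForm (V : Fin n → ℝ) (ha : ∀ᶠ z in 𝓝 x, (a z).IsSymm)
    (hv : ∀ i, DifferentiableAt ℝ (fun z => v z i) x) (i : Fin n) :
    lagrangeDeriv V (fun z => oneForm (v z)) x y i = 2 * s0low a v x y i := by
  have hcurl (k : Fin n) :
      sSym a v x i k = 1 / 2 * (pd (fun z => v z i) x k - pd (fun z => v z k) x i) := by
    simp only [sSym, covD, chr_comm ha _ i k]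
    ring
  have hvi : DifferentiableAt ℝ (uncurry fun z (_ : Fin n → ℝ) => v z i) (x, y) :=
    DifferentiableAt.comp (g := fun z => v z i) (x, y) (hv i) differentiableAt_fst
  have hconst : pd (fun _ : Fin n → ℝ => v x i) y = 0 := by
    ext j
    simp [pd]
  simp only [lagrangeDeriv, pd_oneForm]
  rw [sprayDeriv_eq_dotProduct_sub V hvi, hconst, pd_oneForm_left hv, dotProduct_zero, sub_zero,
    dotProduct, s0low, Finset.mul_sum, ← Finset.sum_sub_distrib]
  exact Finset.sum_congr rfl fun k _ => by rw [hcurl]; ring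

theorem r00_eq_sum_covD (a : (Fin n → ℝ) → Matrix (Fin n) (Fin n) ℝ)
    (v : (Fin n → ℝ) → Fin n → ℝ) (x y : Fin n → ℝ) :
    r00 a v x y = ∑ i, ∑ j, covD a v x i j * y i * y j := by
  have hswap : ∑ i, ∑ j, covD a v x j i * y i * y j = ∑ i, ∑ j, covD a v x i j * y i * y j := by
    rw [Finset.sum_comm]
    simp only [mul_right_comm]
  simp only [r00, rSym, mul_assoc, ← Finset.mul_sum, add_mul, Finset.sum_add_distrib] at hswap ⊢
  rw [hswap]
  ring

theorem sprayDeriv_oneForm (hv : ∀ i, ContDiffAt ℝ 1 (fun z => v z i) x) :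
    sprayDeriv ((2 : ℝ) • alphaG a x y) (fun z => oneForm (v z)) x y = r00 a v x y := by
  have hconn : ((2 : ℝ) • alphaG a x y) ⬝ᵥ v x =
      ∑ i, ∑ j, (∑ k, v x k * chr a x k i j) * y i * y j := by
    simp only [dotProduct, Pi.smul_apply, smul_eq_mul, alphaG, Finset.sum_mul, Finset.mul_sum]
    rw [Finset.sum_comm]
    refine Finset.sum_congr rfl fun i _ => ?_
    rw [Finset.sum_comm]
    exact Finset.sum_congr rfl fun j _ => Finset.sum_congr rfl fun k _ => by ring
  have hbase : y ⬝ᵥ pd (fun z => oneForm (v z) y) x =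
      ∑ i, ∑ j, pd (fun z => v z i) x j * y i * y j := by
    rw [Finset.sum_comm, dotProduct_comm]
    simp only [dotProduct, pd_oneForm_left fun i => (hv i).differentiableAt one_ne_zero,
      Finset.sum_mul]
  rw [sprayDeriv_eq_dotProduct_sub _ ((contDiffAt_oneForm hv y).differentiableAt one_ne_zero),
    pd_oneForm, hconn, hbase, r00_eq_sum_covD]
  simp only [covD, sub_mul, Finset.sum_sub_distrib]

end CovariantDerivative

end RiemannianMetric

section TwoVariables

variable {Ψ : ℝ → ℝ → ℝ} {p q : ℝ}

theorem Ds_eq_fderiv (hΨ : DifferentiableAt ℝ (uncurry Ψ) (p, q)) :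
    Ds Ψ p q = fderiv ℝ (uncurry Ψ) (p, q) (1, 0) := by
  have : HasFDerivAt (fun u => Ψ u q) _ p :=
    HasFDerivAt.comp (g := uncurry Ψ) (f := fun u => (u, q)) p hΨ.hasFDerivAt
      (hasFDerivAt_prodMk_left p q)
  exact this.hasDerivAt.deriv

theorem Dt_eq_fderiv (hΨ : DifferentiableAt ℝ (uncurry Ψ) (p, q)) :
    Dt Ψ p q = fderiv ℝ (uncurry Ψ) (p, q) (0, 1) := by
  have : HasFDerivAt (fun v => Ψ p v) _ q :=
    HasFDerivAt.comp (g := uncurry Ψ) q hΨ.hasFDerivAt (hasFDerivAt_prodMk_right p q)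
  exact this.hasDerivAt.deriv

theorem uncurry_Ds_eventuallyEq (hΨ : ContDiffAt ℝ 1 (uncurry Ψ) (p, q)) :
    uncurry (Ds Ψ) =ᶠ[𝓝 (p, q)] fun r => fderiv ℝ (uncurry Ψ) r (1, 0) :=
  (hΨ.eventually (by simp)).mono fun _ hr => Ds_eq_fderiv (hr.differentiableAt one_ne_zero)

theorem uncurry_Dt_eventuallyEq (hΨ : ContDiffAt ℝ 1 (uncurry Ψ) (p, q)) :
    uncurry (Dt Ψ) =ᶠ[𝓝 (p, q)] fun r => fderiv ℝ (uncurry Ψ) r (0, 1) :=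
  (hΨ.eventually (by simp)).mono fun _ hr => Dt_eq_fderiv (hr.differentiableAt one_ne_zero)

theorem differentiableAt_uncurry_Ds (hΨ : ContDiffAt ℝ 2 (uncurry Ψ) (p, q)) :
    DifferentiableAt ℝ (uncurry (Ds Ψ)) (p, q) :=
  (((hΨ.fderiv_right (m := 1) (by norm_num)).differentiableAt one_ne_zero).clm_apply
    (differentiableAt_const _)).congr_of_eventuallyEq
      (uncurry_Ds_eventuallyEq (hΨ.of_le one_le_two))

theorem differentiableAt_uncurry_Dt (hΨ : ContDiffAt ℝ 2 (uncurry Ψ) (p, q)) :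
    DifferentiableAt ℝ (uncurry (Dt Ψ)) (p, q) :=
  (((hΨ.fderiv_right (m := 1) (by norm_num)).differentiableAt one_ne_zero).clm_apply
    (differentiableAt_const _)).congr_of_eventuallyEq
      (uncurry_Dt_eventuallyEq (hΨ.of_le one_le_two))

theorem Ds_Dt_comm (hΨ : ContDiffAt ℝ 2 (uncurry Ψ) (p, q)) :
    Ds (Dt Ψ) p q = Dt (Ds Ψ) p q := by
  have hΨ1 : ContDiffAt ℝ 1 (uncurry Ψ) (p, q) := hΨ.of_le one_le_two
  have hd : DifferentiableAt ℝ (fderiv ℝ (uncurry Ψ)) (p, q) :=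
    (hΨ.fderiv_right (m := 1) (by norm_num)).differentiableAt one_ne_zero
  rw [Ds_eq_fderiv (differentiableAt_uncurry_Dt hΨ), Dt_eq_fderiv (differentiableAt_uncurry_Ds hΨ),
    (uncurry_Dt_eventuallyEq hΨ1).fderiv_eq, (uncurry_Ds_eventuallyEq hΨ1).fderiv_eq,
    fderiv_clm_apply hd (differentiableAt_const _), fderiv_clm_apply hd (differentiableAt_const _)]
  simpa using hΨ.isSymmSndFDerivAt (by simp) (1, 0) (0, 1)

variable {T : Type*} [NormedAddCommGroup T] [NormedSpace ℝ T] {s t : T → ℝ} {s' t' : T →L[ℝ] ℝ}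
  {z : T}

theorem hasFDerivAt_comp₂ (hΨ : DifferentiableAt ℝ (uncurry Ψ) (s z, t z))
    (hs : HasFDerivAt s s' z) (ht : HasFDerivAt t t' z) :
    HasFDerivAt (fun z => Ψ (s z) (t z))
      (Ds Ψ (s z) (t z) • s' + Dt Ψ (s z) (t z) • t') z := by
  have hchain : HasFDerivAt (fun z => Ψ (s z) (t z)) _ z :=
    HasFDerivAt.comp (g := uncurry Ψ) (f := fun z => (s z, t z)) z hΨ.hasFDerivAt (hs.prodMk ht)
  refine hchain.congr_fderiv ?_
  ext v
  have hsplit : (s' v, t' v) = s' v • ((1, 0) : ℝ × ℝ) + t' v • ((0, 1) : ℝ × ℝ) := by simp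
  simp [hsplit, Ds_eq_fderiv hΨ, Dt_eq_fderiv hΨ, mul_comm, -Prod.smul_mk, -Prod.mk_add_mk]

theorem hasFDerivAt_PiF (hΨ : ContDiffAt ℝ 2 (uncurry Ψ) (s z, t z))
    (hs : HasFDerivAt s s' z) (ht : HasFDerivAt t t' z) :
    HasFDerivAt (fun z => PiF Ψ (s z) (t z))
      (-s z • (Ds (Ds Ψ) (s z) (t z) • s' + Dt (Ds Ψ) (s z) (t z) • t')
        - t z • (Dt (Ds Ψ) (s z) (t z) • s' + Dt (Dt Ψ) (s z) (t z) • t')) z := by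
  have hΨs := hasFDerivAt_comp₂ (differentiableAt_uncurry_Ds hΨ) hs ht
  have hΨt := hasFDerivAt_comp₂ (differentiableAt_uncurry_Dt hΨ) hs ht
  have hΨ0 := hasFDerivAt_comp₂ (hΨ.differentiableAt two_ne_zero) hs ht
  rw [Ds_Dt_comm hΨ] at hΨt
  refine ((hΨ0.sub (hs.mul hΨs)).sub (ht.mul hΨt)).congr_fderiv ?_
  module

/-- The combination of `ω`, `β`, `γ` differentiated here is the differential of `α Ψ(s, t)` with
`ω`, `β`, `γ` in place of the differentials of `α`, `sα`, `tα`. -/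
theorem hasFDerivAt_PiF_mul_add {ω β γ : T → ℝ} {ω' β' γ' : T →L[ℝ] ℝ}
    (hΨ : ContDiffAt ℝ 2 (uncurry Ψ) (s z, t z))
    (hs : HasFDerivAt s s' z) (ht : HasFDerivAt t t' z) (hω : HasFDerivAt ω ω' z)
    (hβ : HasFDerivAt β β' z) (hγ : HasFDerivAt γ γ' z) :
    HasFDerivAt
      (fun z => PiF Ψ (s z) (t z) * ω z + Ds Ψ (s z) (t z) * β z + Dt Ψ (s z) (t z) * γ z)
      (PiF Ψ (s z) (t z) • ω' + Ds Ψ (s z) (t z) • β' + Dt Ψ (s z) (t z) • γ'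
        + (β z - s z * ω z) • (Ds (Ds Ψ) (s z) (t z) • s' + Dt (Ds Ψ) (s z) (t z) • t')
        + (γ z - t z * ω z) • (Dt (Ds Ψ) (s z) (t z) • s' + Dt (Dt Ψ) (s z) (t z) • t')) z := by
  have hΨs := hasFDerivAt_comp₂ (differentiableAt_uncurry_Ds hΨ) hs ht
  have hΨt := hasFDerivAt_comp₂ (differentiableAt_uncurry_Dt hΨ) hs ht
  rw [Ds_Dt_comm hΨ] at hΨt
  refine ((((hasFDerivAt_PiF hΨ hs ht).mul hω).add (hΨs.mul hβ)).add (hΨt.mul hγ)).congr_fderiv ?_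
  module

end TwoVariables

section Perspective

/-- The perspective `A Ψ(B/A, C/A)` of `Ψ`, homogeneous of degree one in `(A, B, C)`; an
`(α, β, γ)`-metric is the perspective of `Ψ` at `(α, β, γ)`. -/
def perspective {T : Type*} (Ψ : ℝ → ℝ → ℝ) (A B C : T → ℝ) (z : T) : ℝ :=
  A z * Ψ (B z / A z) (C z / A z)

section Derivative

variable {T : Type*} [NormedAddCommGroup T] [NormedSpace ℝ T] {Ψ : ℝ → ℝ → ℝ} {A B C : T → ℝ}
  {A' B' C' : T →L[ℝ] ℝ} {z : T}

theorem hasFDerivAt_div_smul (hA0 : A z ≠ 0) (hA : HasFDerivAt A A' z) (hB : HasFDerivAt B B' z) :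
    HasFDerivAt (fun z => B z / A z) ((A z)⁻¹ • (B' - (B z / A z) • A')) z := by
  have hinv : HasFDerivAt (fun z => (A z)⁻¹) (-(A z ^ 2)⁻¹ • A') z :=
    (hasDerivAt_inv hA0).comp_hasFDerivAt z hA
  refine (hB.mul hinv).congr_fderiv ?_
  match_scalars <;> field_simp

theorem hasFDerivAt_perspective (hA0 : A z ≠ 0)
    (hΨ : DifferentiableAt ℝ (uncurry Ψ) (B z / A z, C z / A z))
    (hA : HasFDerivAt A A' z) (hB : HasFDerivAt B B' z) (hC : HasFDerivAt C C' z) :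
    HasFDerivAt (perspective Ψ A B C)
      (PiF Ψ (B z / A z) (C z / A z) • A' + Ds Ψ (B z / A z) (C z / A z) • B'
        + Dt Ψ (B z / A z) (C z / A z) • C') z := by
  refine (hA.mul (hasFDerivAt_comp₂ hΨ (hasFDerivAt_div_smul hA0 hA hB)
    (hasFDerivAt_div_smul hA0 hA hC))).congr_fderiv ?_
  rw [PiF]
  match_scalars <;> field_simp
  ring

theorem contDiffAt_perspective {k : WithTop ℕ∞} (hA0 : A z ≠ 0)
    (hΨ : ContDiffAt ℝ k (uncurry Ψ) (B z / A z, C z / A z))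
    (hA : ContDiffAt ℝ k A z) (hB : ContDiffAt ℝ k B z) (hC : ContDiffAt ℝ k C z) :
    ContDiffAt ℝ k (perspective Ψ A B C) z :=
  hA.mul (ContDiffAt.comp (g := uncurry Ψ) z hΨ ((hB.div hA hA0).prodMk (hC.div hA hA0)))

end Derivative

variable {n : ℕ} {Ψ : ℝ → ℝ → ℝ}

section Fiber

variable {A B C : (Fin n → ℝ) → ℝ} {y : Fin n → ℝ}

theorem pd_div (hA0 : A y ≠ 0) (hA : DifferentiableAt ℝ A y) (hB : DifferentiableAt ℝ B y) :
    pd (fun w => B w / A w) y = (A y)⁻¹ • (pd B y - (B y / A y) • pd A y) :=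
  funext (pd_eq_of_hasFDerivAt (hasFDerivAt_div_smul hA0 hA.hasFDerivAt hB.hasFDerivAt))

theorem pd_perspective (hA0 : A y ≠ 0)
    (hΨ : DifferentiableAt ℝ (uncurry Ψ) (B y / A y, C y / A y))
    (hA : DifferentiableAt ℝ A y) (hB : DifferentiableAt ℝ B y) (hC : DifferentiableAt ℝ C y)
    (i : Fin n) :
    pd (perspective Ψ A B C) y i =
      PiF Ψ (B y / A y) (C y / A y) * pd A y i + Ds Ψ (B y / A y) (C y / A y) * pd B y i
        + Dt Ψ (B y / A y) (C y / A y) * pd C y i :=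
  pd_eq_of_hasFDerivAt
    (hasFDerivAt_perspective hA0 hΨ hA.hasFDerivAt hB.hasFDerivAt hC.hasFDerivAt) i

end Fiber

variable {A B C : (Fin n → ℝ) → (Fin n → ℝ) → ℝ} {x y : Fin n → ℝ}

theorem sprayDeriv_div (V : Fin n → ℝ) (hA0 : A x y ≠ 0)
    (hA : DifferentiableAt ℝ (uncurry A) (x, y)) (hB : DifferentiableAt ℝ (uncurry B) (x, y)) :
    sprayDeriv V (fun z w => B z w / A z w) x y =
      (A x y)⁻¹ * (sprayDeriv V B x y - B x y / A x y * sprayDeriv V A x y) := by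
  have : HasFDerivAt (uncurry fun z w => B z w / A z w) _ (x, y) :=
    hasFDerivAt_div_smul (A := uncurry A) (B := uncurry B) hA0 hA.hasFDerivAt hB.hasFDerivAt
  rw [sprayDeriv, this.fderiv]
  rfl

theorem pd_perspective_eventuallyEq (hA0 : A x y ≠ 0)
    (hΨ : ContDiffAt ℝ 1 (uncurry Ψ) (B x y / A x y, C x y / A x y))
    (hA : ContDiffAt ℝ 1 (uncurry A) (x, y)) (hB : ContDiffAt ℝ 1 (uncurry B) (x, y))
    (hC : ContDiffAt ℝ 1 (uncurry C) (x, y)) (i : Fin n) :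
    uncurry (fun z w => pd (perspective Ψ (A z) (B z) (C z)) w i) =ᶠ[𝓝 (x, y)]
      uncurry fun z w =>
        PiF Ψ (B z w / A z w) (C z w / A z w) * pd (A z) w i
          + Ds Ψ (B z w / A z w) (C z w / A z w) * pd (B z) w i
          + Dt Ψ (B z w / A z w) (C z w / A z w) * pd (C z) w i := by
  have hquot : ContinuousAt
      (fun r : (Fin n → ℝ) × (Fin n → ℝ) => (uncurry B r / uncurry A r, uncurry C r / uncurry A r))
      (x, y) :=
    (hB.continuousAt.div hA.continuousAt hA0).prodMk (hC.continuousAt.div hA.continuousAt hA0)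
  filter_upwards [hA.continuousAt.eventually_ne hA0,
    hquot.eventually (hΨ.eventually (by simp)), eventually_contDiffAt_right (k := 1) hA,
    eventually_contDiffAt_right (k := 1) hB, eventually_contDiffAt_right (k := 1) hC]
    with r hA0r hΨr hAr hBr hCr
  exact pd_perspective hA0r (hΨr.differentiableAt one_ne_zero) (hAr.differentiableAt one_ne_zero)
    (hBr.differentiableAt one_ne_zero) (hCr.differentiableAt one_ne_zero) i

theorem sprayDeriv_PiF_mul_add (V : Fin n → ℝ) {s t ω β γ : (Fin n → ℝ) → (Fin n → ℝ) → ℝ}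
    (hΨ : ContDiffAt ℝ 2 (uncurry Ψ) (s x y, t x y))
    (hs : DifferentiableAt ℝ (uncurry s) (x, y)) (ht : DifferentiableAt ℝ (uncurry t) (x, y))
    (hω : DifferentiableAt ℝ (uncurry ω) (x, y)) (hβ : DifferentiableAt ℝ (uncurry β) (x, y))
    (hγ : DifferentiableAt ℝ (uncurry γ) (x, y)) :
    sprayDeriv V (fun z w => PiF Ψ (s z w) (t z w) * ω z w + Ds Ψ (s z w) (t z w) * β z w
        + Dt Ψ (s z w) (t z w) * γ z w) x y =
      PiF Ψ (s x y) (t x y) * sprayDeriv V ω x y + Ds Ψ (s x y) (t x y) * sprayDeriv V β x y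
        + Dt Ψ (s x y) (t x y) * sprayDeriv V γ x y
        + (β x y - s x y * ω x y) * (Ds (Ds Ψ) (s x y) (t x y) * sprayDeriv V s x y
          + Dt (Ds Ψ) (s x y) (t x y) * sprayDeriv V t x y)
        + (γ x y - t x y * ω x y) * (Dt (Ds Ψ) (s x y) (t x y) * sprayDeriv V s x y
          + Dt (Dt Ψ) (s x y) (t x y) * sprayDeriv V t x y) := by
  have : HasFDerivAt (uncurry fun z w => PiF Ψ (s z w) (t z w) * ω z w
      + Ds Ψ (s z w) (t z w) * β z w + Dt Ψ (s z w) (t z w) * γ z w) _ (x, y) :=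
    hasFDerivAt_PiF_mul_add (s := uncurry s) (t := uncurry t) hΨ hs.hasFDerivAt ht.hasFDerivAt
      hω.hasFDerivAt hβ.hasFDerivAt hγ.hasFDerivAt
  rw [sprayDeriv, this.fderiv]
  rfl

theorem lagrangeDeriv_perspective (V : Fin n → ℝ) {s t : ℝ} (hs : B x y / A x y = s)
    (ht : C x y / A x y = t) (hA0 : A x y ≠ 0) (hΨ : ContDiffAt ℝ 2 (uncurry Ψ) (s, t))
    (hA : ContDiffAt ℝ 2 (uncurry A) (x, y)) (hB : ContDiffAt ℝ 2 (uncurry B) (x, y))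
    (hC : ContDiffAt ℝ 2 (uncurry C) (x, y)) :
    lagrangeDeriv V (fun z => perspective Ψ (A z) (B z) (C z)) x y =
      PiF Ψ s t • lagrangeDeriv V A x y + Ds Ψ s t • lagrangeDeriv V B x y
        + Dt Ψ s t • lagrangeDeriv V C x y
        + (Ds (Ds Ψ) s t * sprayDeriv V (fun z w => B z w / A z w) x y
          + Dt (Ds Ψ) s t * sprayDeriv V (fun z w => C z w / A z w) x y)
            • (pd (B x) y - s • pd (A x) y)
        + (Dt (Ds Ψ) s t * sprayDeriv V (fun z w => B z w / A z w) x y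
          + Dt (Dt Ψ) s t * sprayDeriv V (fun z w => C z w / A z w) x y)
            • (pd (C x) y - t • pd (A x) y) := by
  subst hs ht
  ext i
  have hquot {D : (Fin n → ℝ) → (Fin n → ℝ) → ℝ} (hD : ContDiffAt ℝ 2 (uncurry D) (x, y)) :
      DifferentiableAt ℝ (uncurry fun z w => D z w / A z w) (x, y) :=
    (hD.div hA hA0).differentiableAt two_ne_zero
  have hpd {D : (Fin n → ℝ) → (Fin n → ℝ) → ℝ} (hD : ContDiffAt ℝ 2 (uncurry D) (x, y)) :
      DifferentiableAt ℝ (uncurry fun z w => pd (D z) w i) (x, y) :=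
    (contDiffAt_uncurry_pd (m := 1) hD (by norm_num) i).differentiableAt one_ne_zero
  have hbase {D : (Fin n → ℝ) → (Fin n → ℝ) → ℝ} (hD : ContDiffAt ℝ 2 (uncurry D) (x, y)) :
      DifferentiableAt ℝ (fun z => D z y) x :=
    (contDiffAt_left hD).differentiableAt two_ne_zero
  have hpd_base : pd (fun z => perspective Ψ (A z) (B z) (C z) y) x i = _ :=
    pd_perspective (A := fun z => A z y) hA0 (hΨ.differentiableAt two_ne_zero) (hbase hA)
      (hbase hB) (hbase hC) i
  rw [lagrangeDeriv, hpd_base, sprayDeriv_congr V (pd_perspective_eventuallyEq hA0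
      (hΨ.of_le one_le_two) (hA.of_le one_le_two) (hB.of_le one_le_two) (hC.of_le one_le_two) i),
    sprayDeriv_PiF_mul_add V hΨ (hquot hB) (hquot hC) (hpd hA) (hpd hB) (hpd hC)]
  simp only [lagrangeDeriv, Pi.add_apply, Pi.sub_apply, Pi.smul_apply, smul_eq_mul]
  ring

/-- The Hessian is read off from how the Euler–Lagrange expression depends on the spray. -/
theorem pd2_perspective_mulVec {A B C : (Fin n → ℝ) → ℝ} {s t : ℝ} (hs : B y / A y = s)
    (ht : C y / A y = t) (hA0 : A y ≠ 0) (hΨ : ContDiffAt ℝ 2 (uncurry Ψ) (s, t))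
    (hA : ContDiffAt ℝ 2 A y) (hB : ContDiffAt ℝ 2 B y) (hC : ContDiffAt ℝ 2 C y)
    (v : Fin n → ℝ) :
    Matrix.of (pd2 (perspective Ψ A B C) y) *ᵥ v =
      PiF Ψ s t • Matrix.of (pd2 A y) *ᵥ v + Ds Ψ s t • Matrix.of (pd2 B y) *ᵥ v
        + Dt Ψ s t • Matrix.of (pd2 C y) *ᵥ v
        + (Ds (Ds Ψ) s t * (v ⬝ᵥ pd (fun w => B w / A w) y)
          + Dt (Ds Ψ) s t * (v ⬝ᵥ pd (fun w => C w / A w) y)) • (pd B y - s • pd A y)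
        + (Dt (Ds Ψ) s t * (v ⬝ᵥ pd (fun w => B w / A w) y)
          + Dt (Dt Ψ) s t * (v ⬝ᵥ pd (fun w => C w / A w) y)) • (pd C y - t • pd A y) := by
  have hlift {D : (Fin n → ℝ) → ℝ} (hD : ContDiffAt ℝ 2 D y) :
      ContDiffAt ℝ 2 (uncurry fun _ : Fin n → ℝ => D) (0, y) :=
    ContDiffAt.comp (g := D) (0, y) hD contDiffAt_snd
  have hhess {D : (Fin n → ℝ) → ℝ} (hD : ContDiffAt ℝ 2 D y) := pd2_mulVec_sub 0 v (hlift hD)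
  have hquot {D : (Fin n → ℝ) → ℝ} (hD : ContDiffAt ℝ 2 D y) :
      v ⬝ᵥ pd (fun w => D w / A w) y =
        sprayDeriv 0 (fun _ w => D w / A w) 0 y - sprayDeriv v (fun _ w => D w / A w) 0 y := by
    rw [sprayDeriv_sub_sprayDeriv 0 v (f := fun _ w => D w / A w)
      ((hlift (hD.div hA hA0)).differentiableAt two_ne_zero), sub_zero]
  have hP : ContDiffAt ℝ 2 (perspective Ψ A B C) y :=
    contDiffAt_perspective hA0 (by rwa [hs, ht]) hA hB hC
  have hlagr (V : Fin n → ℝ) := lagrangeDeriv_perspective V (A := fun _ => A) (B := fun _ => B)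
    (C := fun _ => C) (x := 0) hs ht hA0 hΨ (hlift hA) (hlift hB) (hlift hC)
  simp only [sub_zero] at hhess
  rw [hhess hP, hlagr, hlagr, hhess hA, hhess hB, hhess hC, hquot hB, hquot hC]
  module

end Perspective

section RankTwoPerturbation

variable {n : ℕ} {a : Matrix (Fin n) (Fin n) ℝ}

theorem quadInv_comm (ha : a.IsSymm) (u v : Fin n → ℝ) : quadInv a u v = quadInv a v u := by
  rw [quadInv_eq_dotProduct, quadInv_eq_dotProduct, dotProduct_comm u, ← Matrix.vecMul_transpose,
    Matrix.transpose_nonsing_inv, ha.eq, Matrix.dotProduct_mulVec]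

/-- The nonvanishing quantity is the determinant of the linear system satisfied by `h ⬝ᵥ u` and
`k ⬝ᵥ u`. -/
theorem eq_zero_of_smul_mulVec_add_eq_zero (ha : a.IsSymm) (hdet : a.det ≠ 0)
    {h k u : Fin n → ℝ} {c p q r : ℝ} (hc : c ≠ 0)
    (hD : c ^ 2 + c * (p * quadInv a h h + 2 * q * quadInv a h k + r * quadInv a k k)
      + (p * r - q ^ 2) * (quadInv a h h * quadInv a k k - quadInv a h k ^ 2) ≠ 0)
    (hu : c • a *ᵥ u + (p * (h ⬝ᵥ u) + q * (k ⬝ᵥ u)) • h + (q * (h ⬝ᵥ u) + r * (k ⬝ᵥ u)) • k = 0) :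
    u = 0 := by
  have hcancel : a⁻¹ *ᵥ (a *ᵥ u) = u := by
    rw [Matrix.mulVec_mulVec, Matrix.nonsing_inv_mul _ hdet.isUnit, Matrix.one_mulVec]
  have hinv : c • u + (p * (h ⬝ᵥ u) + q * (k ⬝ᵥ u)) • a⁻¹ *ᵥ h
      + (q * (h ⬝ᵥ u) + r * (k ⬝ᵥ u)) • a⁻¹ *ᵥ k = 0 := by
    simpa only [Matrix.mulVec_add, Matrix.mulVec_smul, hcancel, Matrix.mulVec_zero] using
      congrArg (a⁻¹ *ᵥ ·) hu
  have hpair (w : Fin n → ℝ) := congrArg (w ⬝ᵥ ·) hinv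
  simp only [dotProduct_add, dotProduct_smul, smul_eq_mul, dotProduct_zero,
    ← quadInv_eq_dotProduct] at hpair
  have hpair_h := hpair h
  have hpair_k := hpair k
  rw [quadInv_comm ha k h] at hpair_k
  have hhu : h ⬝ᵥ u = 0 := by
    refine (mul_eq_zero.mp ?_).resolve_left hD
    linear_combination (c + q * quadInv a h k + r * quadInv a k k) * hpair_h
      - (q * quadInv a h h + r * quadInv a h k) * hpair_k
  have hku : k ⬝ᵥ u = 0 := by
    refine (mul_eq_zero.mp ?_).resolve_left hD
    linear_combination (c + p * quadInv a h h + q * quadInv a h k) * hpair_k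
      - (p * quadInv a h k + q * quadInv a k k) * hpair_h
  simpa [hhu, hku, hc] using hinv

end RankTwoPerturbation

section AlphaBetaGammaMetric

variable {n : ℕ} {Ψ : ℝ → ℝ → ℝ}

theorem PiF_mul_GammaF {p q : ℝ} (hPi : PiF Ψ p q ≠ 0) (B G Θ : ℝ) :
    PiF Ψ p q * GammaF Ψ B G Θ p q =
      PiF Ψ p q ^ 2 + PiF Ψ p q * (Ds (Ds Ψ) p q * (B - p * p)
          + 2 * Dt (Ds Ψ) p q * (Θ - p * q) + Dt (Dt Ψ) p q * (G - q * q))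
        + (Ds (Ds Ψ) p q * Dt (Dt Ψ) p q - Dt (Ds Ψ) p q ^ 2)
          * ((B - p * p) * (G - q * q) - (Θ - p * q) ^ 2) := by
  rw [GammaF, JF]
  field_simp
  ring

section Fiber

variable {a : Matrix (Fin n) (Fin n) ℝ} {b g y : Fin n → ℝ}

theorem posHomogeneous_Fm (a : Matrix (Fin n) (Fin n) ℝ) (b g : Fin n → ℝ) (Ψ : ℝ → ℝ → ℝ) :
    PosHomogeneous 1 (Fm a b g Ψ) := by
  intro t ht y
  have hsVar (v : Fin n → ℝ) : sVar a v (t • y) = sVar a v y := by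
    rw [sVar, posHomogeneous_alph a t ht y, pow_one, show oneForm v (t • y) = v ⬝ᵥ t • y from rfl,
      dotProduct_smul, smul_eq_mul, mul_div_mul_left _ _ ht.ne']
    rfl
  rw [Fm, hsVar, hsVar, posHomogeneous_alph a t ht y, mul_assoc, Fm]

theorem pd_sVar (ha : a.PosDef) (hy : y ≠ 0) (v : Fin n → ℝ) :
    pd (sVar a v) y = (alph a y)⁻¹ • hl a v y := by
  have hquot := pd_div (alph_pos ha hy).ne'
    ((contDiffAt_alph_fiber ha hy).differentiableAt one_ne_zero)
    (hasFDerivAt_oneForm v y).differentiableAt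
  rw [pd_oneForm] at hquot
  exact hquot

theorem pd2_oneForm (v y : Fin n → ℝ) : pd2 (oneForm v) y = 0 := by
  ext i j
  simp only [pd2, pd_oneForm]
  simp [pd]

theorem alph_smul_pd2_Fm_mulVec (ha : a.PosDef) (hy : y ≠ 0) {p q : ℝ} (hp : sVar a b y = p)
    (hq : sVar a g y = q) (hΨ : ContDiffAt ℝ 2 (uncurry Ψ) (p, q)) (v : Fin n → ℝ) :
    alph a y • Matrix.of (pd2 (Fm a b g Ψ) y) *ᵥ v =
      PiF Ψ p q • (a *ᵥ v - (pd (alph a) y ⬝ᵥ v) • pd (alph a) y)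
        + (Ds (Ds Ψ) p q * (hl a b y ⬝ᵥ v) + Dt (Ds Ψ) p q * (hl a g y ⬝ᵥ v)) • hl a b y
        + (Dt (Ds Ψ) p q * (hl a b y ⬝ᵥ v) + Dt (Dt Ψ) p q * (hl a g y ⬝ᵥ v)) • hl a g y := by
  have hα0 := (alph_pos ha hy).ne'
  have hv (v : Fin n → ℝ) : ContDiffAt ℝ 2 (oneForm v) y := contDiffAt_right
    (f := fun _ => oneForm v) (x := 0)
    (contDiffAt_oneForm (v := fun _ => v) (fun _ => contDiffAt_const) y)
  have hhess : Matrix.of (pd2 (Fm a b g Ψ) y) *ᵥ v = _ :=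
    pd2_perspective_mulVec hp hq hα0 hΨ (contDiffAt_alph_fiber ha hy) (hv b) (hv g) v
  have hpd (v : Fin n → ℝ) : pd (fun w => oneForm v w / alph a w) y = (alph a y)⁻¹ • hl a v y :=
    pd_sVar ha hy v
  have hlb : b - p • pd (alph a) y = hl a b y := hp ▸ rfl
  have hlg : g - q • pd (alph a) y = hl a g y := hq ▸ rfl
  simp only [hhess, pd2_oneForm, hpd, pd_oneForm, hlb, hlg, Matrix.of_zero, Matrix.zero_mulVec,
    smul_zero, add_zero, smul_dotProduct, smul_eq_mul, ← alph_smul_pd2_mulVec ha hy,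
    dotProduct_comm v]
  match_scalars <;> field_simp

theorem exists_eq_smul_of_pd2_Fm_mulVec_eq_zero (ha : a.PosDef) (hy : y ≠ 0) {p q : ℝ}
    (hp : sVar a b y = p) (hq : sVar a g y = q) (hΨ : ContDiffAt ℝ 2 (uncurry Ψ) (p, q))
    (hPi : PiF Ψ p q ≠ 0)
    (hΓ : GammaF Ψ (quadInv a b b) (quadInv a g g) (quadInv a b g) p q ≠ 0) {v : Fin n → ℝ}
    (hv : Matrix.of (pd2 (Fm a b g Ψ) y) *ᵥ v = 0) : ∃ t : ℝ, v = t • y := by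
  refine ⟨(pd (alph a) y ⬝ᵥ v) / alph a y, sub_eq_zero.mp ?_⟩
  have hsymm : a.IsSymm := ha.isHermitian
  refine eq_zero_of_smul_mulVec_add_eq_zero (p := Ds (Ds Ψ) p q) (q := Dt (Ds Ψ) p q)
    (r := Dt (Dt Ψ) p q) (h := hl a b y) (k := hl a g y) hsymm ha.det_pos.ne' hPi ?_ ?_
  · rw [quadInv_hl_hl ha hy, quadInv_hl_hl ha hy, quadInv_hl_hl ha hy, hp, hq,
      ← PiF_mul_GammaF hPi]
    exact mul_ne_zero hPi hΓ
  · have hhess := alph_smul_pd2_Fm_mulVec ha hy hp hq hΨ v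
    rw [hv, smul_zero] at hhess
    simp only [Matrix.mulVec_sub, Matrix.mulVec_smul, mulVec_self_eq_alph_smul_pd ha hy, smul_smul,
      div_mul_cancel₀ _ (alph_pos ha hy).ne', dotProduct_sub, dotProduct_smul,
      hl_dotProduct_self ha hy, smul_zero, sub_zero]
    exact hhess.symm

end Fiber

variable {a : (Fin n → ℝ) → Matrix (Fin n) (Fin n) ℝ} {b g : (Fin n → ℝ) → Fin n → ℝ}
  {x y : Fin n → ℝ} {p q : ℝ}

theorem sprayDeriv_sVar (haS : ∀ i j, ContDiffAt ℝ 3 (fun z => a z i j) x)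
    (ha : ∀ᶠ z in 𝓝 x, (a z).PosDef) (hb : ∀ i, ContDiffAt ℝ 1 (fun z => b z i) x) (hy : y ≠ 0) :
    sprayDeriv ((2 : ℝ) • alphaG a x y) (fun z => sVar (a z) (b z)) x y =
      1 / alph (a x) y * r00 a b x y := by
  have hax := ha.self_of_nhds
  have hdiv : sprayDeriv ((2 : ℝ) • alphaG a x y) (fun z => sVar (a z) (b z)) x y = _ :=
    sprayDeriv_div _ (alph_pos hax hy).ne'
      ((contDiffAt_alph haS hax hy).differentiableAt three_ne_zero)
      ((contDiffAt_oneForm hb y).differentiableAt one_ne_zero)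
  rw [hdiv, sprayDeriv_alph haS ha hy, sprayDeriv_oneForm hb, mul_zero, sub_zero, one_div]

theorem contDiffAt_Fm {k : WithTop ℕ∞} (haS : ∀ i j, ContDiffAt ℝ k (fun z => a z i j) x)
    (ha : (a x).PosDef) (hb : ∀ i, ContDiffAt ℝ k (fun z => b z i) x)
    (hg : ∀ i, ContDiffAt ℝ k (fun z => g z i) x) (hy : y ≠ 0)
    (hΨ : ContDiffAt ℝ k (uncurry Ψ) (sVar (a x) (b x) y, sVar (a x) (g x) y)) :
    ContDiffAt ℝ k (uncurry fun z => Fm (a z) (b z) (g z) Ψ) (x, y) :=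
  contDiffAt_perspective (A := uncurry fun z => alph (a z)) (alph_pos ha hy).ne' hΨ
    (contDiffAt_alph haS ha hy) (contDiffAt_oneForm hb y) (contDiffAt_oneForm hg y)

theorem lagrangeDeriv_Fm (haS : ∀ i j, ContDiffAt ℝ 3 (fun z => a z i j) x)
    (ha : ∀ᶠ z in 𝓝 x, (a z).PosDef) (hb : ∀ i, ContDiffAt ℝ 2 (fun z => b z i) x)
    (hg : ∀ i, ContDiffAt ℝ 2 (fun z => g z i) x) (hy : y ≠ 0)
    (hp : sVar (a x) (b x) y = p) (hq : sVar (a x) (g x) y = q)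
    (hΨ : ContDiffAt ℝ 2 (uncurry Ψ) (p, q)) (i : Fin n) :
    lagrangeDeriv ((2 : ℝ) • alphaG a x y) (fun z => Fm (a z) (b z) (g z) Ψ) x y i =
      2 * Ds Ψ p q * s0low a b x y i + 2 * Dt Ψ p q * s0low a g x y i
        + 1 / alph (a x) y * (Ds (Ds Ψ) p q * r00 a b x y + Dt (Ds Ψ) p q * r00 a g x y)
          * hl (a x) (b x) y i
        + 1 / alph (a x) y * (Dt (Ds Ψ) p q * r00 a b x y + Dt (Dt Ψ) p q * r00 a g x y)
          * hl (a x) (g x) y i := by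
  have hax := ha.self_of_nhds
  have hsymm : ∀ᶠ z in 𝓝 x, (a z).IsSymm := ha.mono fun z hz => hz.isHermitian
  have hchain : lagrangeDeriv ((2 : ℝ) • alphaG a x y) (fun z => Fm (a z) (b z) (g z) Ψ) x y = _ :=
    lagrangeDeriv_perspective _ hp hq (alph_pos hax hy).ne' hΨ
      ((contDiffAt_alph haS hax hy).of_le (by norm_num)) (contDiffAt_oneForm hb y)
      (contDiffAt_oneForm hg y)
  have hs {v : (Fin n → ℝ) → Fin n → ℝ} (hv : ∀ i, ContDiffAt ℝ 2 (fun z => v z i) x) :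
      sprayDeriv ((2 : ℝ) • alphaG a x y) (fun z w => oneForm (v z) w / alph (a z) w) x y =
        1 / alph (a x) y * r00 a v x y :=
    sprayDeriv_sVar haS ha (fun i => (hv i).of_le one_le_two) hy
  rw [hchain, lagrangeDeriv_alph haS ha hy, hs hb, hs hg, pd_oneForm, pd_oneForm]
  simp only [Pi.add_apply, Pi.sub_apply, Pi.smul_apply, Pi.zero_apply, smul_eq_mul, hl, hp, hq,
    lagrangeDeriv_oneForm _ hsymm fun i => (hb i).differentiableAt two_ne_zero,
    lagrangeDeriv_oneForm _ hsymm fun i => (hg i).differentiableAt two_ne_zero]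
  ring

theorem det_gmatF_Fm_ne_zero (haS : ∀ i j, ContDiffAt ℝ 2 (fun z => a z i j) x)
    (ha : (a x).PosDef) (hb : ∀ i, ContDiffAt ℝ 2 (fun z => b z i) x)
    (hg : ∀ i, ContDiffAt ℝ 2 (fun z => g z i) x) (hy : y ≠ 0)
    (hp : sVar (a x) (b x) y = p) (hq : sVar (a x) (g x) y = q)
    (hΨ : ContDiffAt ℝ 2 (uncurry Ψ) (p, q)) (hΨ0 : Ψ p q ≠ 0) (hPi : PiF Ψ p q ≠ 0)
    (hΓ : GammaF Ψ (quadInv (a x) (b x) (b x)) (quadInv (a x) (g x) (g x))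
      (quadInv (a x) (b x) (g x)) p q ≠ 0) :
    (gmatF (fun z => Fm (a z) (b z) (g z) Ψ) x y).det ≠ 0 :=
  det_gmatF_ne_zero (contDiffAt_right (contDiffAt_Fm haS ha hb hg hy (by rwa [hp, hq])))
    (posHomogeneous_Fm _ _ _ _) (mul_ne_zero (alph_pos ha hy).ne' (by rwa [hp, hq]))
    fun _ hv => exists_eq_smul_of_pd2_Fm_mulVec_eq_zero ha hy hp hq hΨ hPi hΓ hv

end AlphaBetaGammaMetric

theorem statement13_general {n : ℕ} {x y : Fin n → ℝ}
    {a : (Fin n → ℝ) → Matrix (Fin n) (Fin n) ℝ} {bv gv : (Fin n → ℝ) → Fin n → ℝ}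
    {Ψ : ℝ → ℝ → ℝ} {p q : ℝ}
    (haS : ∀ i j, ContDiffAt ℝ 3 (fun z => a z i j) x) (haP : ∀ᶠ z in 𝓝 x, (a z).PosDef)
    (hbS : ∀ i, ContDiffAt ℝ 3 (fun z => bv z i) x)
    (hgS : ∀ i, ContDiffAt ℝ 3 (fun z => gv z i) x)
    (hy : y ≠ 0) (hp : p = sVar (a x) (bv x) y) (hq : q = sVar (a x) (gv x) y)
    (hΨ : ContDiffAt ℝ 3 (fun r : ℝ × ℝ => Ψ r.1 r.2) (p, q)) (hΨ0 : Ψ p q ≠ 0)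
    (hPi : PiF Ψ p q ≠ 0)
    (hΓ : GammaF Ψ (quadInv (a x) (bv x) (bv x)) (quadInv (a x) (gv x) (gv x))
      (quadInv (a x) (bv x) (gv x)) p q ≠ 0) (i : Fin n) :
    2 * Ds Ψ p q * s0low a bv x y i + 2 * Dt Ψ p q * s0low a gv x y i =
      (∑ r, pd2 (Fm (a x) (bv x) (gv x) Ψ) y i r *
          (2 * sprayF (fun z w => Fm (a z) (bv z) (gv z) Ψ w) x y r - 2 * alphaG a x y r))
        - (1 / alph (a x) y) *
            (Ds (Ds Ψ) p q * r00 a bv x y + Dt (Ds Ψ) p q * r00 a gv x y) * hl (a x) (bv x) y i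
        - (1 / alph (a x) y) *
            (Dt (Ds Ψ) p q * r00 a bv x y + Dt (Dt Ψ) p q * r00 a gv x y)
            * hl (a x) (gv x) y i := by
  have hax := haP.self_of_nhds
  have hbS2 (i : Fin n) : ContDiffAt ℝ 2 (fun z => bv z i) x := (hbS i).of_le (by norm_num)
  have hgS2 (i : Fin n) : ContDiffAt ℝ 2 (fun z => gv z i) x := (hgS i).of_le (by norm_num)
  have hΨ2 : ContDiffAt ℝ 2 (uncurry Ψ) (p, q) := hΨ.of_le (by norm_num)
  have hF : ContDiffAt ℝ 3 (uncurry fun z => Fm (a z) (bv z) (gv z) Ψ) (x, y) :=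
    contDiffAt_Fm haS hax hbS hgS hy (hp ▸ hq ▸ hΨ)
  have hF0 : Fm (a x) (bv x) (gv x) Ψ y ≠ 0 := mul_ne_zero (alph_pos hax hy).ne' (hp ▸ hq ▸ hΨ0)
  have hdet := det_gmatF_Fm_ne_zero (fun i j => (haS i j).of_le (by norm_num)) hax hbS2 hgS2 hy
    hp.symm hq.symm hΨ2 hΨ0 hPi hΓ
  have hgeodesic := lagrangeDeriv_sprayF hF (fun z => posHomogeneous_Fm _ _ _ _) hF0 hdet
  have hhess := congrFun (pd2_mulVec_sub ((2 : ℝ) • alphaG a x y)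
    ((2 : ℝ) • sprayF (fun z => Fm (a z) (bv z) (gv z) Ψ) x y)
    (hF.of_le (by norm_num))) i
  rw [hgeodesic, sub_zero, lagrangeDeriv_Fm haS haP hbS2 hgS2 hy hp.symm hq.symm hΨ2] at hhess
  have hsum : ∑ r, pd2 (Fm (a x) (bv x) (gv x) Ψ) y i r *
      (2 * sprayF (fun z w => Fm (a z) (bv z) (gv z) Ψ w) x y r - 2 * alphaG a x y r) = _ := hhess
  rw [hsum]
  ring

/-- the identity for `2Ψ_s·^βs_{i0} + 2Ψ_s̄·^γs_{i0}` with `D^i = 2G^i − 2^αG^i`. -/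
theorem statement13
    (n : ℕ) (hn : 2 ≤ n)
    (U : Set (Fin n → ℝ)) (hU : IsOpen U)
    (a : (Fin n → ℝ) → Matrix (Fin n) (Fin n) ℝ)
    (haS : ∀ i j, ContDiffOn ℝ (⊤ : ℕ∞) (fun x => a x i j) U)
    (haP : ∀ x ∈ U, (a x).PosDef)
    (bv gv : (Fin n → ℝ) → Fin n → ℝ)
    (hbS : ∀ i, ContDiffOn ℝ (⊤ : ℕ∞) (fun x => bv x i) U)
    (hgS : ∀ i, ContDiffOn ℝ (⊤ : ℕ∞) (fun x => gv x i) U)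
    (b₀ g₀ : ℝ) (hb₀ : 0 < b₀) (hg₀ : 0 < g₀)
    (hb : ∀ x ∈ U, Real.sqrt (quadInv (a x) (bv x) (bv x)) < b₀)
    (hg : ∀ x ∈ U, Real.sqrt (quadInv (a x) (gv x) (gv x)) < g₀)
    (Ψ : ℝ → ℝ → ℝ)
    (hΨ : ContDiffOn ℝ (⊤ : ℕ∞) (fun p : ℝ × ℝ => Ψ p.1 p.2)
      (Set.Ioo (-b₀) b₀ ×ˢ Set.Ioo (-g₀) g₀))
    (hΨpos : ∀ p ∈ Set.Ioo (-b₀) b₀ ×ˢ Set.Ioo (-g₀) g₀, 0 < Ψ p.1 p.2)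
    (hPipos : ∀ x ∈ U, ∀ y : Fin n → ℝ, y ≠ 0 →
      0 < PiF Ψ (sVar (a x) (bv x) y) (sVar (a x) (gv x) y))
    (hΓpos : ∀ x ∈ U, ∀ y : Fin n → ℝ, y ≠ 0 →
      0 < GammaF Ψ (quadInv (a x) (bv x) (bv x)) (quadInv (a x) (gv x) (gv x))
          (quadInv (a x) (bv x) (gv x)) (sVar (a x) (bv x) y) (sVar (a x) (gv x) y))
 :
    ∀ x ∈ U, ∀ y : Fin n → ℝ, y ≠ 0 → ∀ i : Fin n,
      ∀ p q : ℝ, p = sVar (a x) (bv x) y → q = sVar (a x) (gv x) y →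
        2 * Ds Ψ p q * s0low a bv x y i + 2 * Dt Ψ p q * s0low a gv x y i =
          (∑ r, pd2 (Fm (a x) (bv x) (gv x) Ψ) y i r *
              (2 * sprayF (fun z w => Fm (a z) (bv z) (gv z) Ψ w) x y r
                - 2 * alphaG a x y r))
            - (1 / alph (a x) y) *
                (Ds (Ds Ψ) p q * r00 a bv x y + Dt (Ds Ψ) p q * r00 a gv x y)
                * hl (a x) (bv x) y i
            - (1 / alph (a x) y) *
                (Dt (Ds Ψ) p q * r00 a bv x y + Dt (Dt Ψ) p q * r00 a gv x y)
                * hl (a x) (gv x) y i := by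
  intro x hx y hy i p q hp hq
  have hxU := hU.mem_nhds hx
  have hpq : (p, q) ∈ Ioo (-b₀) b₀ ×ˢ Ioo (-g₀) g₀ := by
    rw [hp, hq]
    exact ⟨sVar_mem_Ioo (haP x hx) hy (hb x hx), sVar_mem_Ioo (haP x hx) hy (hg x hx)⟩
  have hle : ((3 : ℕ) : WithTop ℕ∞) ≤ (⊤ : ℕ∞) := WithTop.coe_le_coe.mpr le_top
  exact statement13_general (fun i j => ((haS i j).contDiffAt hxU).of_le hle)
    (Filter.eventually_of_mem hxU haP) (fun i => ((hbS i).contDiffAt hxU).of_le hle)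
    (fun i => ((hgS i).contDiffAt hxU).of_le hle) hy hp hq
    ((hΨ.contDiffAt ((isOpen_Ioo.prod isOpen_Ioo).mem_nhds hpq)).of_le hle) (hΨpos _ hpq).ne'
    (hp ▸ hq ▸ (hPipos x hx y hy).ne') (hp ▸ hq ▸ (hΓpos x hx y hy).ne') i
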